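/- Let k ≥ 1, ℓ be integers with gcd(ℓ,k) = 1, and let m ≥ 1 be an integer. Then the partial sums ∑_{2 ≤ n ≤ x, p(n) ≡ ℓ (mod k)} c_n(m)/n converge, as x → ∞, to −1/φ(k), where c_n(m) is the Ramanujan sum and φ is the Euler totient function. -/

import Mathlib

/-!
The argument transfers a statement about the *largest* prime factor `P(n)` into one about the
least prime factor `p(n)`.

Alladi's duality (`alladi_duality`) says that `∑_{e ∣ n} μ(e) f(p(e)) = -f(P(n))` for `n ≥ 2`
(the term `e = 1` counting as `0`): pairing `e` with `e P(n)` cancels everything except the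
terms `e = 1` and `e = P(n)`. Let `f` be the indicator of a reduced residue class mod `k`.
The prime number theorem in arithmetic progressions implies that `f(P(n))` has mean value
`1/φ(k)` (`sublinear_osc_maxFac`): write `n = m P(n)` and, for fixed `m`, sum over the primes
`P(n)`; the integers with no large prime factor are negligible (`smooth_count`). Axer's theorem
(`axer`) turns the mean value of `1 * g`, with `g(n) = μ(n) f(p(n))`, into the value of the
series `∑ g(n)/n`, provided that `∑_{n ≤ N} g(n) = o(N)`; this last estimate follows from
`∑_{n ≤ N, (n,Q)=1} μ(n) = o(N)`, because all but a small proportion of the integers have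
`p(n) ≤ Y`, and the condition `p(n) = j` is a difference of two coprimality conditions. The result
is Alladi's formula (`tendsto_alladi`), the case `m = 1`.

For general `m`, the evaluation `c_n(m) = ∑_{d ∣ (n,m)} μ(n/d) d` shows that the sum equals
`∑_{d ∣ m} ∑_e μ(e) f(p(de))/e`. The term `d = 1` is Alladi's formula. For `d ≥ 2` the value
`p(de) = min(p(d), p(e))` is determined by finitely many coprimality conditions on `e`, so that the
inner series vanishes by `∑_{(e,Q)=1} μ(e)/e = 0` (`tendsto_sum_moebius_minFac_mul`).

The analytic input, both for primes in progressions and for the Möbius function, is a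
Wiener–Ikehara theorem (`wiener_ikehara`), proved by smoothing with Fejér kernels and the
Riemann–Lebesgue lemma, combined with the nonvanishing of Dirichlet `L`-functions on `Re s = 1`.
-/

open Finset Filter

/-- The Ramanujan sum `c_n(m) = ∑_{1 ≤ q ≤ n, gcd(q,n)=1} e^{2πiqm/n}`. -/
noncomputable def ramanujanSum (n m : ℕ) : ℂ :=
  ∑ q ∈ (Finset.Icc 1 n).filter (fun q => Nat.gcd q n = 1),
    Complex.exp (2 * Real.pi * Complex.I * q * m / n)

/-! ### The Fejér kernel -/

/-- The Fejér kernel `2 (1 - cos y) / y ^ 2`, extended continuously by `1` at the origin. -/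
noncomputable def fejer (y : ℝ) : ℝ := if y = 0 then 1 else 2 * (1 - Real.cos y) / y ^ 2

/-- One half of the Fourier transform of the triangle function, from an explicit antiderivative. -/
lemma fejer_half (y : ℝ) (hy : y ≠ 0) :
    ∫ t in (0:ℝ)..1, ((1 - t : ℝ) : ℂ) * Complex.exp (Complex.I * t * y) =
      (1 - Complex.exp (Complex.I * y)) / y ^ 2 + Complex.I / y := by
  have hyc : (y : ℂ) ≠ 0 := by exact_mod_cast hy
  have hI := Complex.I_ne_zero
  have hd : ∀ t ∈ Set.uIcc (0:ℝ) 1, HasDerivAt (fun t : ℝ =>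
      ((1 - t : ℝ) : ℂ) * (Complex.exp (Complex.I * t * y) / (Complex.I * y)) -
        Complex.exp (Complex.I * t * y) / y ^ 2)
      (((1 - t : ℝ) : ℂ) * Complex.exp (Complex.I * t * y)) t := by
    intro t _
    have h1 : HasDerivAt (fun t : ℝ => Complex.exp (Complex.I * t * y))
        (Complex.exp (Complex.I * t * y) * (Complex.I * 1 * y)) t := by
      have : HasDerivAt (fun t : ℝ => (t : ℂ)) 1 t := Complex.ofRealCLM.hasDerivAt
      exact ((this.const_mul Complex.I).mul_const (y : ℂ)).cexp
    have h2 : HasDerivAt (fun t : ℝ => ((1 - t : ℝ) : ℂ)) (-1) t := by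
      have : HasDerivAt (fun t : ℝ => (t : ℂ)) 1 t := Complex.ofRealCLM.hasDerivAt
      simpa using this.const_sub 1
    refine ((h2.mul (h1.div_const (Complex.I * y))).sub
      (h1.div_const ((y : ℂ) ^ 2))).congr_deriv ?_
    field_simp
    ring_nf
    simp only [Complex.I_sq]
    ring
  rw [intervalIntegral.integral_eq_sub_of_hasDerivAt hd
    (Continuous.intervalIntegrable (by fun_prop) _ _)]
  simp
  field_simp
  ring_nf

/-- The Fejér kernel is the Fourier transform of the triangle function on `[-1, 1]`. -/
lemma fejer_eq (y : ℝ) :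
    ∫ t in (-1:ℝ)..1, ((1 - |t| : ℝ) : ℂ) * Complex.exp (Complex.I * t * y) = fejer y := by
  have hInt : ∀ a b : ℝ, IntervalIntegrable (fun t : ℝ => ((1 - |t| : ℝ) : ℂ) *
      Complex.exp (Complex.I * t * y)) MeasureTheory.volume a b :=
    fun a b => Continuous.intervalIntegrable (by fun_prop) _ _
  rw [← intervalIntegral.integral_add_adjacent_intervals (hInt (-1) 0) (hInt 0 1)]
  have e1 : ∫ t in (0:ℝ)..1, ((1 - |t| : ℝ) : ℂ) * Complex.exp (Complex.I * t * y) =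
      ∫ t in (0:ℝ)..1, ((1 - t : ℝ) : ℂ) * Complex.exp (Complex.I * t * y) := by
    refine intervalIntegral.integral_congr fun t ht => ?_
    rw [Set.uIcc_of_le zero_le_one] at ht
    simp [abs_of_nonneg ht.1]
  have e2 : ∫ t in (-1:ℝ)..0, ((1 - |t| : ℝ) : ℂ) * Complex.exp (Complex.I * t * y) =
      ∫ t in (0:ℝ)..1, ((1 - t : ℝ) : ℂ) * Complex.exp (Complex.I * t * ((-y : ℝ) : ℂ)) := by
    have := intervalIntegral.integral_comp_neg (a := 0) (b := 1) (fun t : ℝ => ((1 - |t| : ℝ) : ℂ) *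
      Complex.exp (Complex.I * t * y))
    rw [neg_zero] at this
    rw [← this]
    refine intervalIntegral.integral_congr fun t ht => ?_
    rw [Set.uIcc_of_le zero_le_one] at ht
    simp [abs_of_nonneg ht.1]
  rw [e1, e2]
  by_cases hy : y = 0
  · subst hy
    have h0 : ∫ t in (0:ℝ)..1, ((1 - t : ℝ) : ℂ) = 1 / 2 := by
      rw [intervalIntegral.integral_ofReal, intervalIntegral.integral_sub (by simp) (by simp)]
      simp
      norm_num
    simp only [neg_zero, Complex.ofReal_zero, mul_zero, Complex.exp_zero, mul_one, h0, fejer]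
    norm_num
  · rw [fejer_half y hy, fejer_half (-y) (neg_ne_zero.mpr hy)]
    have hyc : (y : ℂ) ≠ 0 := by exact_mod_cast hy
    simp only [fejer, hy, if_false]
    push_cast
    rw [Complex.cos]
    field_simp
    ring_nf

lemma fejer_nonneg (y : ℝ) : 0 ≤ fejer y := by
  unfold fejer
  split_ifs
  · exact zero_le_one
  · have := Real.cos_le_one y
    exact div_nonneg (by linarith) (by positivity)

lemma fejer_le (y : ℝ) : fejer y ≤ 5 * (1 + y ^ 2)⁻¹ := by
  unfold fejer
  split_ifs with h
  · subst h; norm_num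
  · have h2 : 0 < y ^ 2 := by positivity
    have h3 := Real.neg_one_le_cos y
    have h4 := Real.one_sub_sq_div_two_le_cos (x := y)
    rw [← div_eq_mul_inv, div_le_div_iff₀ h2 (by positivity)]
    nlinarith

lemma fejer_neg (y : ℝ) : fejer (-y) = fejer y := by
  simp [fejer]

lemma measurable_fejer : Measurable fejer := by
  unfold fejer
  exact Measurable.ite (measurableSet_singleton 0) measurable_const (by fun_prop)

lemma integrable_fejer : MeasureTheory.Integrable fejer := by
  refine (integrable_inv_one_add_sq.const_mul 5).mono' measurable_fejer.aestronglyMeasurable ?_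
  refine Eventually.of_forall fun y => ?_
  rw [Real.norm_of_nonneg (fejer_nonneg y)]
  exact fejer_le y

lemma integral_fejer_pos : 0 < ∫ y, fejer y := by
  rw [MeasureTheory.integral_pos_iff_support_of_nonneg fejer_nonneg integrable_fejer]
  have : Set.Ioo (0:ℝ) 1 ⊆ Function.support fejer := by
    intro y hy
    have h1 : y ≠ 0 := hy.1.ne'
    have : Real.cos y < 1 := by
      have := Real.cos_lt_cos_of_nonneg_of_le_pi_div_two le_rfl
        (by linarith [hy.2, Real.pi_gt_three] : y ≤ Real.pi / 2) hy.1
      simpa using this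
    simp only [Function.mem_support, fejer, h1, if_false]
    exact (div_pos (by linarith) (by have := hy.1; positivity)).ne'
  refine lt_of_lt_of_le ?_ (MeasureTheory.measure_mono this)
  simp

/-! ### Smoothing by Fejér kernels and boundary values of Laplace transforms -/

/-- If `D` is bounded with Laplace transform `H`, then the Fejér average of `D(u) e^{-εu}` around `v`
is an integral of `H` over a segment of the line `Re z = ε` (Fubini and `fejer_eq`). -/
lemma fejer_conv_eq (D : ℝ → ℝ) (hD : Measurable D) (C : ℝ) (hC : ∀ u, |D u| ≤ C)
    (H : ℂ → ℂ)
    (h : ∀ ε : ℝ, 0 < ε → ∀ τ : ℝ,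
      ∫ u in Set.Ioi (0:ℝ), (D u : ℂ) * Complex.exp (-(ε + τ * Complex.I) * u) =
        H (ε + τ * Complex.I))
    (r : ℝ) (v ε : ℝ) (hε : 0 < ε) :
    ∫ u in Set.Ioi (0:ℝ), (D u : ℂ) * Real.exp (-ε * u) * fejer (r * (v - u)) =
      ∫ t in (-1:ℝ)..1, ((1 - |t| : ℝ) : ℂ) * Complex.exp (Complex.I * t * (r * v)) *
        H (ε + (r * t : ℝ) * Complex.I) := by
  have e1 : ∀ t : ℝ, ((1 - |t| : ℝ) : ℂ) * Complex.exp (Complex.I * t * (r * v)) *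
        H (ε + (r * t : ℝ) * Complex.I) = ∫ u in Set.Ioi (0:ℝ),
        (D u : ℂ) * Real.exp (-ε * u) *
          (((1 - |t| : ℝ) : ℂ) * Complex.exp (Complex.I * t * (r * (v - u) : ℝ))) := by
    intro t
    rw [← h ε hε, ← MeasureTheory.integral_const_mul]
    congr 1
    ext u
    have : Complex.exp (Complex.I * t * (r * v)) *
        Complex.exp (-(ε + (r * t : ℝ) * Complex.I) * u) =
        Complex.exp ((-ε * u : ℝ)) * Complex.exp (Complex.I * t * (r * (v - u) : ℝ)) := by
      rw [← Complex.exp_add, ← Complex.exp_add]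
      congr 1
      push_cast
      ring
    rw [Complex.ofReal_exp]
    linear_combination (((1 - |t| : ℝ) : ℂ) * (D u : ℂ)) * this
  simp_rw [e1]
  rw [intervalIntegral.integral_of_le (by norm_num)]
  rw [MeasureTheory.integral_integral_swap]
  · refine MeasureTheory.integral_congr_ae (Eventually.of_forall fun u => ?_)
    simp only
    rw [MeasureTheory.integral_const_mul, ← intervalIntegral.integral_of_le (by norm_num),
      fejer_eq]
  · have hb : MeasureTheory.Integrable (fun z : ℝ × ℝ => (1 : ℝ) * (C * Real.exp (-ε * z.2)))
        ((MeasureTheory.volume.restrict (Set.Ioc (-1:ℝ) 1)).prod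
          (MeasureTheory.volume.restrict (Set.Ioi (0:ℝ)))) := by
      refine MeasureTheory.Integrable.mul_prod (f := fun _ : ℝ => (1:ℝ))
        (g := fun u : ℝ => C * Real.exp (-ε * u)) ?_ ?_
      · exact MeasureTheory.integrable_const _
      · exact (exp_neg_integrableOn_Ioi 0 hε).const_mul C
    refine hb.mono' ?_ ?_
    · refine Measurable.aestronglyMeasurable ?_
      simp only [Function.uncurry_def]
      fun_prop
    · rw [MeasureTheory.Measure.prod_restrict]
      refine (MeasureTheory.ae_restrict_iff' (measurableSet_Ioc.prod measurableSet_Ioi)).mpr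
        (Eventually.of_forall fun z hz => ?_)
      obtain ⟨⟨h1, h2⟩, h3⟩ := hz
      have habs : |z.1| ≤ 1 := abs_le.mpr ⟨h1.le, h2⟩
      have hz1 : ‖Complex.exp (Complex.I * z.1 * (r * (v - z.2) : ℝ))‖ = 1 := by
        have : Complex.I * z.1 * (r * (v - z.2) : ℝ) =
          ((z.1 * (r * (v - z.2)) : ℝ) : ℂ) * Complex.I := by push_cast; ring
        rw [this, Complex.norm_exp_ofReal_mul_I]
      simp only [Function.uncurry_def, norm_mul, hz1, Complex.norm_real, Real.norm_eq_abs,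
        Real.abs_exp, mul_one]
      have h5 : |1 - (|z.1|)| ≤ 1 := by
        rw [abs_of_nonneg (by linarith)]; linarith [abs_nonneg z.1]
      have h6 := hC z.2
      have h7 := Real.exp_pos (-ε * z.2)
      have h8 : |D z.2| * Real.exp (-ε * z.2) ≤ C * Real.exp (-ε * z.2) := by gcongr
      calc _ ≤ |D z.2| * Real.exp (-ε * z.2) * 1 := by gcongr
        _ ≤ _ := by linarith

/-- The limiting case `ε → 0` of `fejer_conv_eq`, when `H` extends continuously to `Re z ≥ 0`. -/
lemma fejer_conv_eq_boundary (D : ℝ → ℝ) (hD : Measurable D) (C : ℝ) (hC : ∀ u, |D u| ≤ C)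
    (H : ℂ → ℂ) (hH : ContinuousOn H {s | 0 ≤ s.re})
    (h : ∀ ε : ℝ, 0 < ε → ∀ τ : ℝ,
      ∫ u in Set.Ioi (0:ℝ), (D u : ℂ) * Complex.exp (-(ε + τ * Complex.I) * u) =
        H (ε + τ * Complex.I))
    (r : ℝ) (hr : 0 < r) (v : ℝ) :
    ∫ u in Set.Ioi (0:ℝ), (D u : ℂ) * fejer (r * (v - u)) =
      ∫ t in (-1:ℝ)..1, ((1 - |t| : ℝ) : ℂ) * Complex.exp (Complex.I * t * (r * v)) *
        H ((r * t : ℝ) * Complex.I) := by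
  have hI : MeasureTheory.Integrable (fun u : ℝ => fejer (r * (v - u))) := by
    exact (integrable_fejer.comp_mul_left' hr.ne').comp_sub_left v
  have hev : ∀ᶠ ε : ℝ in nhdsWithin 0 (Set.Ioi 0), ε ∈ Set.Ioo (0:ℝ) 1 :=
    Ioo_mem_nhdsGT one_pos
  have l1 : Tendsto (fun ε : ℝ => ∫ u in Set.Ioi (0:ℝ),
      (D u : ℂ) * Real.exp (-ε * u) * fejer (r * (v - u))) (nhdsWithin 0 (Set.Ioi 0))
      (nhds (∫ u in Set.Ioi (0:ℝ), (D u : ℂ) * fejer (r * (v - u)))) := by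
    refine MeasureTheory.tendsto_integral_filter_of_dominated_convergence
      (fun u => C * fejer (r * (v - u))) ?_ ?_ ?_ ?_
    · refine Eventually.of_forall fun ε => Measurable.aestronglyMeasurable ?_
      have := measurable_fejer
      fun_prop
    · filter_upwards [hev] with ε hε
      refine (MeasureTheory.ae_restrict_iff' measurableSet_Ioi).mpr
        (Eventually.of_forall fun u hu => ?_)
      simp only [norm_mul, Complex.norm_real, Real.norm_eq_abs, Real.abs_exp]
      rw [abs_of_nonneg (fejer_nonneg _)]
      have h0 := fejer_nonneg (r * (v - u))
      have h1 : Real.exp (-ε * u) ≤ 1 := by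
        rw [Real.exp_le_one_iff]
        have := mul_pos hε.1 hu
        linarith
      have h2 := hC u
      have h3 : |D u| * Real.exp (-ε * u) ≤ C * 1 := by
        gcongr
        exact (abs_nonneg _).trans h2
      nlinarith
    · exact (hI.const_mul C).integrableOn
    · refine Eventually.of_forall fun u => ?_
      have : Continuous (fun ε : ℝ => (D u : ℂ) * Real.exp (-ε * u) * fejer (r * (v - u))) := by
        fun_prop
      have := (this.tendsto 0).mono_left (nhdsWithin_le_nhds (s := Set.Ioi 0))
      simpa using this
  have hcomp : IsCompact (Set.Icc (0:ℝ) 1 ×ℂ Set.Icc (-r) r) := isCompact_Icc.reProdIm isCompact_Icc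
  obtain ⟨B, hB⟩ := hcomp.exists_bound_of_continuousOn (f := H)
    (hH.mono fun z hz => by
      rw [Complex.mem_reProdIm] at hz
      exact hz.1.1)
  have htI : ∀ t ∈ Set.Ioc (-1:ℝ) 1, r * t ∈ Set.Icc (-r) r := fun t ht =>
    ⟨by nlinarith [ht.1], by nlinarith [ht.2]⟩
  have hcont : ∀ ε : ℝ, 0 ≤ ε → Continuous (fun t : ℝ => H (ε + (r * t : ℝ) * Complex.I)) := by
    intro ε hε
    refine hH.comp_continuous (by fun_prop) fun t => ?_
    simpa using hε
  have l2 : Tendsto (fun ε : ℝ => ∫ t in (-1:ℝ)..1, ((1 - |t| : ℝ) : ℂ) *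
      Complex.exp (Complex.I * t * (r * v)) * H (ε + (r * t : ℝ) * Complex.I))
      (nhdsWithin 0 (Set.Ioi 0))
      (nhds (∫ t in (-1:ℝ)..1, ((1 - |t| : ℝ) : ℂ) * Complex.exp (Complex.I * t * (r * v)) *
        H ((r * t : ℝ) * Complex.I))) := by
    refine intervalIntegral.tendsto_integral_filter_of_dominated_convergence
      (fun t => 1 * B) ?_ ?_ ?_ ?_
    · filter_upwards [hev] with ε hε
      have := hcont ε hε.1.le
      exact (Continuous.mul (by fun_prop) this).aestronglyMeasurable
    · filter_upwards [hev] with ε hε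
      refine Eventually.of_forall fun t ht => ?_
      rw [Set.uIoc_of_le (by norm_num)] at ht
      have hz1 : ‖Complex.exp (Complex.I * t * (r * v))‖ = 1 := by
        have : Complex.I * t * (r * v) = ((t * (r * v) : ℝ) : ℂ) * Complex.I := by
          push_cast; ring
        rw [this, Complex.norm_exp_ofReal_mul_I]
      have habs : |t| ≤ 1 := abs_le.mpr ⟨ht.1.le, ht.2⟩
      have h5 : |1 - (|t|)| ≤ 1 := by
        rw [abs_of_nonneg (by linarith)]; linarith [abs_nonneg t]
      have h6 : ‖H (ε + (r * t : ℝ) * Complex.I)‖ ≤ B := by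
        refine hB _ ?_
        rw [Complex.mem_reProdIm]
        refine ⟨?_, ?_⟩
        · simpa using ⟨hε.1.le, hε.2.le⟩
        · have := htI t ht
          simpa using this
      simp only [norm_mul, hz1, Complex.norm_real, Real.norm_eq_abs, mul_one]
      gcongr
    · exact intervalIntegrable_const
    · refine Eventually.of_forall fun t ht => ?_
      refine Tendsto.const_mul _ ?_
      have hmem : ((r * t : ℝ) : ℂ) * Complex.I ∈ {s : ℂ | 0 ≤ s.re} := by simp
      refine (hH _ hmem).tendsto.comp ?_
      refine tendsto_nhdsWithin_iff.mpr ⟨?_, ?_⟩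
      · have : Continuous (fun ε : ℝ => (ε : ℂ) + (r * t : ℝ) * Complex.I) := by fun_prop
        have := (this.tendsto 0).mono_left (nhdsWithin_le_nhds (s := Set.Ioi 0))
        simpa using this
      · filter_upwards [hev] with ε hε
        simpa using hε.1.le
  refine tendsto_nhds_unique l1 (l2.congr' ?_)
  filter_upwards [hev] with ε hε
  exact (fejer_conv_eq D hD C hC H h r v ε hε.1).symm

/-- By the Riemann–Lebesgue lemma, the Fejér averages of `D` around `v` tend to `0` as `v → ∞`. -/
lemma tendsto_fejer_conv (D : ℝ → ℝ) (hD : Measurable D) (C : ℝ) (hC : ∀ u, |D u| ≤ C)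
    (H : ℂ → ℂ) (hH : ContinuousOn H {s | 0 ≤ s.re})
    (h : ∀ ε : ℝ, 0 < ε → ∀ τ : ℝ,
      ∫ u in Set.Ioi (0:ℝ), (D u : ℂ) * Complex.exp (-(ε + τ * Complex.I) * u) =
        H (ε + τ * Complex.I))
    (r : ℝ) (hr : 0 < r) :
    Tendsto (fun v : ℝ => ∫ u in Set.Ioi (0:ℝ), D u * fejer (r * (v - u))) atTop (nhds 0) := by
  have hRL := Real.tendsto_integral_exp_smul_cocompact (fun t : ℝ =>
    (Set.Ioc (-1:ℝ) 1).indicator (fun t : ℝ => ((1 - |t| : ℝ) : ℂ) * H ((r * t : ℝ) * Complex.I)) t)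
  have hlin : Tendsto (fun v : ℝ => -(r / (2 * Real.pi)) * v) atTop (cocompact ℝ) := by
    refine Tendsto.mono_right ?_ atBot_le_cocompact
    exact tendsto_id.const_mul_atTop_of_neg (by have := Real.pi_pos; simp; positivity)
  have hc := hRL.comp hlin
  have hre : Tendsto (fun v : ℝ => ((∫ u in Set.Ioi (0:ℝ), D u * fejer (r * (v - u)) : ℝ) : ℂ))
      atTop (nhds ((0 : ℝ) : ℂ)) := by
    rw [Complex.ofReal_zero]
    refine hc.congr fun v => ?_
    rw [← integral_complex_ofReal]
    push_cast
    rw [fejer_conv_eq_boundary D hD C hC H hH h r hr v, intervalIntegral.integral_of_le (by norm_num),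
      ← MeasureTheory.integral_indicator measurableSet_Ioc]
    simp only [Function.comp]
    congr 1
    ext t
    by_cases ht : t ∈ Set.Ioc (-1:ℝ) 1
    · simp only [Set.indicator_of_mem ht, Circle.smul_def, Real.fourierChar_apply, smul_eq_mul]
      have : (((2 * Real.pi * -(t * (-(r / (2 * Real.pi)) * v)) : ℝ) : ℂ) * Complex.I) =
          Complex.I * t * (r * v) := by
        have := Real.pi_ne_zero
        have h2 : (2 * Real.pi * -(t * (-(r / (2 * Real.pi)) * v)) : ℝ) = t * (r * v) := by
          field_simp
        rw [h2]; push_cast; ring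
      rw [this]; push_cast; ring
    · simp [Set.indicator_of_notMem ht]
  have := (Complex.continuous_re.tendsto _).comp hre
  simpa only [Function.comp_def, Complex.ofReal_re] using this

/-! ### Removing the smoothing -/

/-- The half-line `u > 0` carries asymptotically the full mass of the kernel centred at `v`. -/
lemma tendsto_integral_fejer_Ioi (r : ℝ) (hr : 0 < r) :
    Tendsto (fun v : ℝ => ∫ u in Set.Ioi (0:ℝ), r * fejer (r * (v - u))) atTop
      (nhds (∫ y, fejer y)) := by
  have h1 : Tendsto (fun w : ℝ => ∫ y in Set.Iio w, fejer y) atTop (nhds (∫ y, fejer y)) := by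
    have h := (MeasureTheory.aecover_Iio tendsto_id
      (μ := MeasureTheory.volume) (l := (atTop : Filter ℝ))).integral_tendsto_of_countably_generated
        integrable_fejer
    simpa using h
  refine (h1.comp (tendsto_id.const_mul_atTop hr)).congr fun v => ?_
  simp only [Function.comp, id]
  rw [← MeasureTheory.integral_indicator measurableSet_Iio,
    ← MeasureTheory.integral_indicator measurableSet_Ioi]
  have h2 := MeasureTheory.Measure.integral_comp_mul_left
    (fun y => (Set.Iio (r * v)).indicator fejer y) r
  have h3 := MeasureTheory.integral_sub_left_eq_self
    (fun y => (Set.Iio (r * v)).indicator fejer (r * y)) MeasureTheory.volume v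
  rw [h2] at h3
  have h4 : ∫ y, (Set.Iio (r * v)).indicator fejer y =
      r * ∫ x, (Set.Iio (r * v)).indicator fejer (r * (v - x)) := by
    rw [h3, abs_of_pos (inv_pos.mpr hr), smul_eq_mul, mul_inv_cancel_left₀ hr.ne']
  rw [h4, ← MeasureTheory.integral_const_mul]
  congr 1
  ext u
  by_cases hu : 0 < u
  · have : r * (v - u) ∈ Set.Iio (r * v) := by
      simp only [Set.mem_Iio]; nlinarith
    rw [Set.indicator_of_mem this, Set.indicator_of_mem (by exact hu)]
  · have : r * (v - u) ∉ Set.Iio (r * v) := by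
      simp only [Set.mem_Iio, not_lt]; nlinarith
    rw [Set.indicator_of_notMem this, Set.indicator_of_notMem (by simpa using hu), mul_zero]

/-- The mass of the rescaled kernel on a window of half-width `δ`. -/
lemma fejer_window (r δ c : ℝ) (hδ : 0 < δ) :
    ∫ u in Set.Ioc (c - δ) (c + δ), r * fejer (r * (c - u)) =
      ∫ y in (-(r * δ))..(r * δ), fejer y := by
  rw [← intervalIntegral.integral_of_le (by linarith), intervalIntegral.integral_const_mul]
  have h := intervalIntegral.integral_comp_sub_left (a := c - δ) (b := c + δ)
    (fun y => fejer (r * y)) c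
  rw [h]
  have h2 := intervalIntegral.mul_integral_comp_mul_left (a := c - (c + δ)) (b := c - (c - δ))
    (f := fejer) r
  rw [h2]
  congr 1 <;> ring

/-- If `exp u * B u` is monotone and `B` is asymptotically `ρ` after smoothing
by every rescaled Fejér kernel, then `B` tends to `ρ`. -/
lemma tendsto_of_fejer_conv (B : ℝ → ℝ) (hB : Measurable B) (C : ℝ) (hB0 : ∀ u, 0 ≤ B u)
    (hBC : ∀ u, B u ≤ C) (hmono : ∀ u w, u ≤ w → Real.exp u * B u ≤ Real.exp w * B w) (ρ : ℝ)
    (h : ∀ r : ℝ, 0 < r →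
      Tendsto (fun v : ℝ => ∫ u in Set.Ioi (0:ℝ), (B u - ρ) * fejer (r * (v - u))) atTop (nhds 0)) :
    Tendsto B atTop (nhds ρ) := by
  set c := ∫ y, fejer y with hc
  have hcpos : 0 < c := integral_fejer_pos
  have hC0 : 0 ≤ C := (hB0 0).trans (hBC 0)
  have hI : ∀ r : ℝ, 0 < r → ∀ v : ℝ,
      MeasureTheory.Integrable (fun u : ℝ => r * fejer (r * (v - u))) := fun r hr v =>
    ((integrable_fejer.comp_mul_left' hr.ne').comp_sub_left v).const_mul r
  have hBI : ∀ r : ℝ, 0 < r → ∀ v : ℝ,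
      MeasureTheory.Integrable (fun u : ℝ => B u * (r * fejer (r * (v - u)))) := by
    intro r hr v
    refine ((hI r hr v).const_mul C).mono' ?_ ?_
    · have := measurable_fejer
      exact Measurable.aestronglyMeasurable (by fun_prop)
    · refine Eventually.of_forall fun u => ?_
      have h0 : 0 ≤ r * fejer (r * (v - u)) := mul_nonneg hr.le (fejer_nonneg _)
      rw [Real.norm_of_nonneg (mul_nonneg (hB0 u) h0)]
      exact mul_le_mul_of_nonneg_right (hBC u) h0
  -- the smoothed averages of `B` itself
  have hconv : ∀ r : ℝ, 0 < r →
      Tendsto (fun v : ℝ => ∫ u in Set.Ioi (0:ℝ), B u * (r * fejer (r * (v - u)))) atTop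
        (nhds (ρ * c)) := by
    intro r hr
    have h1 := ((h r hr).const_mul r).add ((tendsto_integral_fejer_Ioi r hr).const_mul ρ)
    rw [mul_zero, zero_add] at h1
    refine h1.congr fun v => ?_
    rw [← MeasureTheory.integral_const_mul, ← MeasureTheory.integral_const_mul,
      ← MeasureTheory.integral_add]
    · congr 1
      ext u
      ring
    · refine (((hBI r hr v).sub ((hI r hr v).const_mul ρ)).integrableOn).congr ?_
      refine Eventually.of_forall fun u => ?_
      simp only [Pi.sub_apply]
      ring
    · exact ((hI r hr v).const_mul ρ).integrableOn
  have hkap : Tendsto (fun δ : ℝ => ∫ y in (-(δ⁻¹))..(δ⁻¹), fejer y) (nhdsWithin 0 (Set.Ioi 0))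
      (nhds c) :=
    MeasureTheory.intervalIntegral_tendsto_integral integrable_fejer
      (tendsto_neg_atTop_atBot.comp tendsto_inv_nhdsGT_zero) tendsto_inv_nhdsGT_zero
  have hid : Tendsto (fun δ : ℝ => δ) (nhdsWithin 0 (Set.Ioi 0)) (nhds 0) :=
    nhdsWithin_le_nhds
  have hexp : Tendsto (fun δ : ℝ => Real.exp (2 * δ)) (nhdsWithin 0 (Set.Ioi 0)) (nhds 1) := by
    have : Continuous (fun δ : ℝ => Real.exp (2 * δ)) := by fun_prop
    simpa using (this.tendsto 0).mono_left (nhdsWithin_le_nhds (s := Set.Ioi 0))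
  -- With `r = δ⁻²` the window `|u - v| ≤ δ` carries asymptotically all the mass of the kernel.
  have hrδ : ∀ δ : ℝ, 0 < δ → (δ⁻¹ ^ 2) * δ = δ⁻¹ := fun δ hδ => by field_simp
  rw [tendsto_order]
  constructor
  · intro a ha
    have hlim : Tendsto (fun δ : ℝ => ((ρ * c - δ) -
        C * (c - ∫ y in (-(δ⁻¹))..(δ⁻¹), fejer y)) / (Real.exp (2 * δ) * c))
        (nhdsWithin 0 (Set.Ioi 0)) (nhds ρ) := by
      have := (((hid.const_sub (ρ * c)).sub ((hkap.const_sub c).const_mul C))).div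
        (hexp.mul_const c) (by simpa using hcpos.ne')
      have e : (ρ * c - 0 - C * (c - c)) / (1 * c) = ρ := by
        field_simp
        ring
      rw [e] at this
      exact this
    obtain ⟨δ, hδa, hδ⟩ := ((hlim.eventually (lt_mem_nhds ha)).and self_mem_nhdsWithin).exists
    have hδ : 0 < δ := hδ
    have hr : 0 < δ⁻¹ ^ 2 := by positivity
    have hev := ((hconv _ hr).comp (tendsto_atTop_add_const_right atTop (-δ) tendsto_id)).eventually
      (lt_mem_nhds (by linarith : ρ * c - δ < ρ * c))
    filter_upwards [hev] with v hv
    simp only [Function.comp, id] at hv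
    refine hδa.trans_le ?_
    rw [div_le_iff₀ (by positivity)]
    set w := v + -δ with hw
    set k : ℝ → ℝ := fun u => δ⁻¹ ^ 2 * fejer (δ⁻¹ ^ 2 * (w - u)) with hk
    have hk0 : ∀ u, 0 ≤ k u := fun u => mul_nonneg hr.le (fejer_nonneg _)
    have hkI : MeasureTheory.Integrable k := hI _ hr w
    have hBkI : MeasureTheory.Integrable (fun u => B u * k u) := hBI _ hr w
    have hwin : ∫ u in Set.Ioc (w - δ) (w + δ), k u = ∫ y in (-(δ⁻¹))..(δ⁻¹), fejer y := by
      rw [fejer_window _ δ w hδ, hrδ δ hδ]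
    have htot : ∫ u, k u = c := by
      have := MeasureTheory.integral_sub_left_eq_self
        (fun y => fejer (δ⁻¹ ^ 2 * y)) MeasureTheory.volume w
      rw [MeasureTheory.integral_const_mul, this, MeasureTheory.Measure.integral_comp_mul_left,
        abs_of_pos (inv_pos.mpr hr), smul_eq_mul, mul_inv_cancel_left₀ hr.ne']
    have hsplit := MeasureTheory.integral_add_compl
      (measurableSet_Ioc (a := w - δ) (b := w + δ)) hkI
    have hsplitB := MeasureTheory.integral_add_compl
      (measurableSet_Ioc (a := w - δ) (b := w + δ)) hBkI
    have b0 : ∫ u in Set.Ioi (0:ℝ), B u * k u ≤ ∫ u, B u * k u :=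
      MeasureTheory.setIntegral_le_integral hBkI
        (Eventually.of_forall fun u => mul_nonneg (hB0 u) (hk0 u))
    have b1 : ∫ u in (Set.Ioc (w - δ) (w + δ))ᶜ, B u * k u ≤
        ∫ u in (Set.Ioc (w - δ) (w + δ))ᶜ, C * k u :=
      MeasureTheory.setIntegral_mono hBkI.integrableOn (hkI.const_mul C).integrableOn
        fun u => mul_le_mul_of_nonneg_right (hBC u) (hk0 u)
    have b2 : ∫ u in Set.Ioc (w - δ) (w + δ), B u * k u ≤
        ∫ u in Set.Ioc (w - δ) (w + δ), (Real.exp (2 * δ) * B v) * k u := by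
      refine MeasureTheory.setIntegral_mono_on hBkI.integrableOn
        (hkI.const_mul _).integrableOn measurableSet_Ioc fun u hu => ?_
      refine mul_le_mul_of_nonneg_right ?_ (hk0 u)
      have h1 := hmono u v (by linarith [hu.2])
      have h2 : Real.exp v ≤ Real.exp (2 * δ) * Real.exp u := by
        rw [← Real.exp_add]; exact Real.exp_le_exp.mpr (by linarith [hu.1])
      have h3 := Real.exp_pos u
      have h4 : Real.exp u * B u ≤ Real.exp u * (Real.exp (2 * δ) * B v) := by
        nlinarith [hB0 v]
      exact le_of_mul_le_mul_left h4 h3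
    rw [MeasureTheory.integral_const_mul] at b1 b2
    have b3 : ∫ u in Set.Ioc (w - δ) (w + δ), k u ≤ c := by
      rw [← htot]
      exact MeasureTheory.setIntegral_le_integral hkI (Eventually.of_forall hk0)
    have b4 : Real.exp (2 * δ) * B v * ∫ u in Set.Ioc (w - δ) (w + δ), k u ≤
        Real.exp (2 * δ) * B v * c :=
      mul_le_mul_of_nonneg_left b3 (mul_nonneg (Real.exp_pos _).le (hB0 v))
    have b5 : ∫ u in (Set.Ioc (w - δ) (w + δ))ᶜ, k u =
        c - ∫ y in (-(δ⁻¹))..(δ⁻¹), fejer y := by linarith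
    rw [b5] at b1
    linarith
  · intro a ha
    have hlim : Tendsto (fun δ : ℝ => Real.exp (2 * δ) * (ρ * c + δ) /
        ∫ y in (-(δ⁻¹))..(δ⁻¹), fejer y) (nhdsWithin 0 (Set.Ioi 0)) (nhds ρ) := by
      have := (hexp.mul (hid.const_add (ρ * c))).div hkap hcpos.ne'
      have e : 1 * (ρ * c + 0) / c = ρ := by
        field_simp
        ring
      rw [e] at this
      exact this
    obtain ⟨δ, ⟨hδa, hδκ⟩, hδ⟩ := (((hlim.eventually (gt_mem_nhds ha)).and
      (hkap.eventually (lt_mem_nhds hcpos))).and self_mem_nhdsWithin).exists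
    have hδ : 0 < δ := hδ
    have hr : 0 < δ⁻¹ ^ 2 := by positivity
    have hev := ((hconv _ hr).comp (tendsto_atTop_add_const_right atTop δ tendsto_id)).eventually
      (gt_mem_nhds (by linarith : ρ * c < ρ * c + δ))
    filter_upwards [hev, eventually_gt_atTop 0] with v hv hv0
    simp only [Function.comp, id] at hv
    refine lt_of_le_of_lt ?_ hδa
    rw [le_div_iff₀ hδκ]
    set w := v + δ with hw
    set k : ℝ → ℝ := fun u => δ⁻¹ ^ 2 * fejer (δ⁻¹ ^ 2 * (w - u)) with hk
    have hk0 : ∀ u, 0 ≤ k u := fun u => mul_nonneg hr.le (fejer_nonneg _)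
    have hkI : MeasureTheory.Integrable k := hI _ hr w
    have hBkI : MeasureTheory.Integrable (fun u => B u * k u) := hBI _ hr w
    have hwin : ∫ u in Set.Ioc (w - δ) (w + δ), k u = ∫ y in (-(δ⁻¹))..(δ⁻¹), fejer y := by
      rw [fejer_window _ δ w hδ, hrδ δ hδ]
    have b0 : ∫ u in Set.Ioc (w - δ) (w + δ), B u * k u ≤ ∫ u in Set.Ioi (0:ℝ), B u * k u := by
      refine MeasureTheory.setIntegral_mono_set hBkI.integrableOn
        (Eventually.of_forall fun u => mul_nonneg (hB0 u) (hk0 u)) ?_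
      refine Eventually.of_forall fun u (hu : u ∈ Set.Ioc (w - δ) (w + δ)) => ?_
      change 0 < u
      linarith [hu.1]
    have b1 : ∫ u in Set.Ioc (w - δ) (w + δ), (Real.exp (-(2 * δ)) * B v) * k u ≤
        ∫ u in Set.Ioc (w - δ) (w + δ), B u * k u := by
      refine MeasureTheory.setIntegral_mono_on (hkI.const_mul _).integrableOn
        hBkI.integrableOn measurableSet_Ioc fun u hu => ?_
      refine mul_le_mul_of_nonneg_right ?_ (hk0 u)
      have h1 := hmono v u (by linarith [hu.1])
      have h2 : Real.exp (-(2 * δ)) * Real.exp u ≤ Real.exp v := by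
        rw [← Real.exp_add]; exact Real.exp_le_exp.mpr (by linarith [hu.2])
      have h3 := Real.exp_pos u
      have h4 : Real.exp u * (Real.exp (-(2 * δ)) * B v) ≤ Real.exp u * B u := by
        nlinarith [hB0 v]
      exact le_of_mul_le_mul_left h4 h3
    rw [MeasureTheory.integral_const_mul, hwin] at b1
    have b2 : Real.exp (-(2 * δ)) * B v * (∫ y in (-(δ⁻¹))..(δ⁻¹), fejer y) ≤ ρ * c + δ := by
      linarith
    have b3 : Real.exp (2 * δ) * Real.exp (-(2 * δ)) = 1 := by
      rw [← Real.exp_add]; simp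
    calc B v * (∫ y in (-(δ⁻¹))..(δ⁻¹), fejer y)
        = Real.exp (2 * δ) * (Real.exp (-(2 * δ)) * B v * (∫ y in (-(δ⁻¹))..(δ⁻¹), fejer y)) := by
          linear_combination (-(B v * (∫ y in (-(δ⁻¹))..(δ⁻¹), fejer y))) * b3
      _ ≤ _ := by gcongr

/-! ### The Wiener–Ikehara theorem -/

/-- A Tauberian theorem of Wiener–Ikehara type, for nonnegative coefficients whose partial sums
are already known to be `O(N)`. -/
theorem wiener_ikehara (a : ℕ → ℝ) (ha : ∀ n, 0 ≤ a n) (C : ℝ)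
    (hC : ∀ N : ℕ, ∑ k ∈ Icc 1 N, a k ≤ C * N) (ρ : ℝ) (G : ℂ → ℂ)
    (hG : ContinuousOn G {s | 1 ≤ s.re})
    (hF : ∀ s : ℂ, 1 < s.re → LSeries (fun n => (a n : ℂ)) s = G s + ρ / (s - 1)) :
    Tendsto (fun N : ℕ => (∑ k ∈ Icc 1 N, a k) / N) atTop (nhds ρ) := by
  have hC0 : 0 ≤ C := by
    have := hC 1
    simp only [Icc_self, sum_singleton, Nat.cast_one, mul_one] at this
    exact (ha 1).trans this
  set S : ℕ → ℝ := fun N => ∑ k ∈ Icc 1 N, a k with hS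
  have hS0 : ∀ N, 0 ≤ S N := fun N => sum_nonneg fun k _ => ha k
  have hSmono : Monotone S := fun M N hMN =>
    sum_le_sum_of_subset_of_nonneg (Icc_subset_Icc_right hMN) fun k _ _ => ha k
  set B : ℝ → ℝ := fun u => S ⌊Real.exp u⌋₊ * Real.exp (-u) with hBdef
  have hBm : Measurable B := by
    have h1 : Measurable S := measurable_from_nat
    have h2 : Measurable (fun u : ℝ => ⌊Real.exp u⌋₊) := Nat.measurable_floor.comp Real.measurable_exp
    exact (h1.comp h2).mul (by fun_prop)
  have hB0 : ∀ u, 0 ≤ B u := fun u => mul_nonneg (hS0 _) (Real.exp_pos _).le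
  have hBC : ∀ u, B u ≤ C := by
    intro u
    have h1 : S ⌊Real.exp u⌋₊ ≤ C * Real.exp u :=
      (hC _).trans (mul_le_mul_of_nonneg_left (Nat.floor_le (Real.exp_pos u).le) hC0)
    calc B u ≤ C * Real.exp u * Real.exp (-u) :=
          mul_le_mul_of_nonneg_right h1 (Real.exp_pos _).le
      _ = C := by rw [mul_assoc, ← Real.exp_add]; simp
  have hBexp : ∀ u, Real.exp u * B u = S ⌊Real.exp u⌋₊ := by
    intro u
    simp only [hBdef]
    rw [mul_comm, mul_assoc, ← Real.exp_add]
    simp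
  have hmono : ∀ u w, u ≤ w → Real.exp u * B u ≤ Real.exp w * B w := by
    intro u w huw
    rw [hBexp, hBexp]
    exact hSmono (Nat.floor_mono (Real.exp_le_exp.mpr huw))
  have hO : S =O[atTop] fun n : ℕ => (n : ℝ) ^ (1 : ℝ) := by
    refine Asymptotics.IsBigO.of_bound C (Eventually.of_forall fun n => ?_)
    rw [Real.rpow_one, Real.norm_of_nonneg (hS0 n), Real.norm_of_nonneg (Nat.cast_nonneg n)]
    exact hC n
  have hlap : ∀ s : ℂ, 1 < s.re → ∫ u in Set.Ioi (0:ℝ), (B u : ℂ) * Complex.exp (-(s - 1) * u) =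
      LSeries (fun n => (a n : ℂ)) s / s := by
    intro s hs
    have hs0 : s ≠ 0 := by
      rintro rfl
      simp at hs
      linarith
    rw [LSeries_eq_mul_integral_of_nonneg a zero_le_one hs hO ha, mul_div_cancel_left₀ _ hs0]
    have := MeasureTheory.integral_comp_exp_Ioi (fun t : ℝ =>
      (∑ k ∈ Icc 1 ⌊t⌋₊, (a k : ℂ)) * (t : ℂ) ^ (-(s + 1))) 0
    rw [Real.exp_zero] at this
    rw [← this]
    congr 1
    ext u
    simp only [hBdef, hS, Complex.real_smul]
    push_cast
    rw [← Complex.ofReal_exp, Complex.cpow_def_of_ne_zero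
      (by exact_mod_cast (Real.exp_pos u).ne'), ← Complex.ofReal_log (Real.exp_pos u).le,
      Real.log_exp, Complex.ofReal_exp]
    have e : Complex.exp (-(u : ℂ)) * Complex.exp (-(s - 1) * u) =
        Complex.exp u * Complex.exp (u * -(s + 1)) := by
      rw [← Complex.exp_add, ← Complex.exp_add]
      congr 1
      ring
    linear_combination (∑ k ∈ Icc 1 ⌊Real.exp u⌋₊, (a k : ℂ)) * e
  set H : ℂ → ℂ := fun z => (G (1 + z) - ρ) / (1 + z) with hHdef
  have hH : ContinuousOn H {s | 0 ≤ s.re} := by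
    have h1 : ContinuousOn (fun z : ℂ => G (1 + z)) {s | 0 ≤ s.re} :=
      hG.comp (by fun_prop) fun z hz => by simpa using hz
    refine (h1.sub continuousOn_const).div (by fun_prop) fun z hz h0 => ?_
    have h2 := congrArg Complex.re h0
    have h3 : 0 ≤ z.re := hz
    simp at h2
    linarith
  have hlapD : ∀ ε : ℝ, 0 < ε → ∀ τ : ℝ,
      ∫ u in Set.Ioi (0:ℝ), ((B u - ρ : ℝ) : ℂ) * Complex.exp (-(ε + τ * Complex.I) * u) =
        H (ε + τ * Complex.I) := by
    intro ε hε τ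
    set z : ℂ := ε + τ * Complex.I with hz
    have hzre : z.re = ε := by simp [hz]
    have hz0 : z ≠ 0 := by
      intro h0
      rw [h0] at hzre
      simp at hzre
      linarith
    have hz1 : 1 + z ≠ 0 := by
      intro h0
      have := congrArg Complex.re h0
      simp [hzre] at this
      linarith
    have hs : 1 < (1 + z).re := by simp [hzre, hε]
    have hneg : (-z).re < 0 := by simp [hzre, hε]
    have h1 := hlap (1 + z) hs
    rw [add_sub_cancel_left] at h1
    have hIe := integrableOn_exp_mul_complex_Ioi hneg 0
    have h2 := integral_exp_mul_complex_Ioi hneg 0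
    have hI1 : MeasureTheory.IntegrableOn (fun u : ℝ => (B u : ℂ) * Complex.exp (-z * u))
        (Set.Ioi 0) := by
      refine MeasureTheory.Integrable.bdd_mul (c := C) hIe ?_ ?_
      · exact (Complex.measurable_ofReal.comp hBm).aestronglyMeasurable
      · refine Eventually.of_forall fun u => ?_
        rw [Complex.norm_real, Real.norm_of_nonneg (hB0 u)]
        exact hBC u
    have h3 : ∫ u in Set.Ioi (0:ℝ), ((B u - ρ : ℝ) : ℂ) * Complex.exp (-z * u) =
        (∫ u in Set.Ioi (0:ℝ), (B u : ℂ) * Complex.exp (-z * u)) -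
        ρ * ∫ u in Set.Ioi (0:ℝ), Complex.exp (-z * u) := by
      rw [← MeasureTheory.integral_const_mul, ← MeasureTheory.integral_sub hI1 (hIe.const_mul _)]
      congr 1
      ext u
      push_cast
      ring
    rw [h3, h1, h2, hF _ hs, hHdef]
    simp only [add_sub_cancel_left, Complex.ofReal_zero, mul_zero, Complex.exp_zero]
    field_simp
    ring
  have hBlim : Tendsto B atTop (nhds ρ) := by
    refine tendsto_of_fejer_conv B hBm C hB0 hBC hmono ρ fun r hr => ?_
    refine tendsto_fejer_conv (fun u => B u - ρ) (hBm.sub_const ρ) (C + |ρ|) (fun u => ?_) H hH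
      hlapD r hr
    refine (abs_sub _ _).trans ?_
    rw [abs_of_nonneg (hB0 u)]
    linarith [hBC u]
  have hlog : Tendsto (fun N : ℕ => Real.log N) atTop atTop :=
    Real.tendsto_log_atTop.comp tendsto_natCast_atTop_atTop
  refine (hBlim.comp hlog).congr' ?_
  filter_upwards [eventually_gt_atTop 0] with N hN
  have hN' : (0:ℝ) < N := by exact_mod_cast hN
  simp only [Function.comp, hBdef, Real.exp_neg, Real.exp_log hN', Nat.floor_natCast]
  rfl

/-! ### Primes in arithmetic progressions -/

/-- `u(N) = o(N)`, in the uniform form that is convenient for splitting sums: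
for every `ε > 0` one has `|u(N)| ≤ εN + C_ε` for *all* `N`. -/
def Sublinear (u : ℕ → ℝ) : Prop :=
  ∀ ε > 0, ∃ C : ℝ, 0 ≤ C ∧ ∀ N : ℕ, |u N| ≤ ε * N + C

lemma sublinear_of_tendsto {u : ℕ → ℝ} (h : Tendsto (fun N : ℕ => u N / N) atTop (nhds 0)) :
    Sublinear u := by
  intro ε hε
  obtain ⟨N₀, hN₀⟩ := (Metric.tendsto_atTop.mp h) ε hε
  refine ⟨∑ N ∈ range (N₀ + 1), |u N|, sum_nonneg fun _ _ => abs_nonneg _, fun N => ?_⟩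
  by_cases hN : N < N₀ + 1
  · have := single_le_sum (f := fun N => |u N|) (fun i _ => abs_nonneg _) (mem_range.mpr hN)
    have h2 : 0 ≤ ε * N := by positivity
    linarith
  · have h1 := hN₀ N (by omega)
    have hNpos : (0 : ℝ) < N := by exact_mod_cast (by omega : 0 < N)
    rw [Real.dist_eq, sub_zero, abs_div, abs_of_pos hNpos, div_lt_iff₀ hNpos] at h1
    have : 0 ≤ ∑ N ∈ range (N₀ + 1), |u N| := sum_nonneg fun _ _ => abs_nonneg _
    linarith

lemma Sublinear.tendsto {u : ℕ → ℝ} (h : Sublinear u) :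
    Tendsto (fun N : ℕ => u N / N) atTop (nhds 0) := by
  rw [Metric.tendsto_atTop]
  intro ε hε
  obtain ⟨C, hC, hu⟩ := h (ε / 2) (by positivity)
  obtain ⟨N₀, hN₀⟩ := exists_nat_gt (2 * C / ε)
  refine ⟨N₀ + 1, fun N hN => ?_⟩
  have hNpos : (0 : ℝ) < N := by exact_mod_cast (by omega : 0 < N)
  have hN' : (N₀ : ℝ) ≤ N := by exact_mod_cast (by omega : N₀ ≤ N)
  rw [Real.dist_eq, sub_zero, abs_div, abs_of_pos hNpos, div_lt_iff₀ hNpos]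
  have := hu N
  rw [div_lt_iff₀ hε] at hN₀
  nlinarith

lemma Sublinear.add {u v : ℕ → ℝ} (hu : Sublinear u) (hv : Sublinear v) :
    Sublinear (fun N => u N + v N) := by
  apply sublinear_of_tendsto
  simpa [add_div] using hu.tendsto.add hv.tendsto

lemma Sublinear.const_mul {u : ℕ → ℝ} (c : ℝ) (hu : Sublinear u) :
    Sublinear (fun N => c * u N) := by
  apply sublinear_of_tendsto
  simpa [mul_div_assoc] using hu.tendsto.const_mul c

lemma Sublinear.sub {u v : ℕ → ℝ} (hu : Sublinear u) (hv : Sublinear v) :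
    Sublinear (fun N => u N - v N) := by
  simpa [sub_eq_add_neg] using hu.add (hv.const_mul (-1))

lemma Sublinear.sum {ι : Type*} (s : Finset ι) {u : ι → ℕ → ℝ} (hu : ∀ i ∈ s, Sublinear (u i)) :
    Sublinear (fun N => ∑ i ∈ s, u i N) := by
  apply sublinear_of_tendsto
  simpa [sum_div] using tendsto_finsetSum s (fun i hi => (hu i hi).tendsto)

open ArithmeticFunction in
/-- The prime number theorem in arithmetic progressions, for the von Mangoldt function. -/
lemma tendsto_vonMangoldt_residueClass {q : ℕ} [NeZero q] {a : ZMod q} (ha : IsUnit a) :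
    Tendsto (fun N : ℕ => (∑ n ∈ Icc 1 N, vonMangoldt.residueClass a n) / N) atTop
      (nhds (1 / (q.totient : ℝ))) := by
  refine wiener_ikehara _ (vonMangoldt.residueClass_nonneg a) (Real.log 4 + 4) (fun N => ?_)
    (1 / (q.totient : ℝ)) (vonMangoldt.LFunctionResidueClassAux a)
    (vonMangoldt.continuousOn_LFunctionResidueClassAux a) (fun s hs => ?_)
  · refine (sum_le_sum fun n _ => vonMangoldt.residueClass_le a n).trans ?_
    have h := Chebyshev.psi_le_const_mul_self (x := (N : ℝ)) (by positivity)
    rw [Chebyshev.psi_eq_sum_Icc, Nat.floor_natCast] at h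
    refine le_trans (sum_le_sum_of_subset_of_nonneg ?_ fun _ _ _ => vonMangoldt_nonneg) h
    exact Icc_subset_Icc_left (by simp)
  · rw [vonMangoldt.eqOn_LFunctionResidueClassAux ha hs]
    push_cast
    ring

open ArithmeticFunction in
lemma tendsto_theta_residueClass {q : ℕ} [NeZero q] {a : ZMod q} (ha : IsUnit a) :
    Tendsto (fun N : ℕ => (∑ p ∈ (Icc 1 N).filter Nat.Prime,
      (if (p : ZMod q) = a then Real.log p else 0)) / N) atTop
      (nhds (1 / (q.totient : ℝ))) := by
  have h1 := tendsto_vonMangoldt_residueClass ha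
  have h2 : Tendsto (fun N : ℕ => (∑ n ∈ Icc 1 N, vonMangoldt.residueClass a n) / N -
      (∑ p ∈ (Icc 1 N).filter Nat.Prime,
      (if (p : ZMod q) = a then Real.log p else 0)) / N) atTop (nhds 0) := by
    have h3 : Tendsto (fun N : ℕ => 2 * √(N : ℝ) * Real.log N / N) atTop (nhds 0) := by
      have h4 : Tendsto (fun x : ℝ => 2 * (Real.log x / x ^ (1/2 : ℝ))) atTop (nhds (2 * 0)) :=
        ((isLittleO_log_rpow_atTop (by norm_num : (0:ℝ) < 1/2)).tendsto_div_nhds_zero).const_mul 2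
      rw [mul_zero] at h4
      refine (h4.comp tendsto_natCast_atTop_atTop).congr' ?_
      filter_upwards [eventually_gt_atTop 0] with N hN
      have hN' : (0 : ℝ) < N := by exact_mod_cast hN
      simp only [Function.comp]
      rw [← Real.sqrt_eq_rpow]
      have := Real.mul_self_sqrt hN'.le
      have h5 : 0 < √(N : ℝ) := Real.sqrt_pos.mpr hN'
      rw [mul_div_assoc', div_eq_div_iff h5.ne' hN'.ne']
      linear_combination (2 * Real.log N) * (-this)
    have key : ∀ N : ℕ, (∑ n ∈ Icc 1 N, vonMangoldt.residueClass a n) / N -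
      (∑ p ∈ (Icc 1 N).filter Nat.Prime,
      (if (p : ZMod q) = a then Real.log p else 0)) / N =
        (∑ n ∈ (Icc 1 N).filter (fun n => ¬ n.Prime), vonMangoldt.residueClass a n) / N := by
      intro N
      rw [← sub_div, ← sum_filter_add_sum_filter_not (Icc 1 N) Nat.Prime]
      congr 1
      rw [add_sub_right_comm, ← sum_sub_distrib, add_eq_right]
      apply sum_eq_zero
      intro p hp
      simp [vonMangoldt.residueClass, Set.indicator_apply,
        vonMangoldt_apply_prime (mem_filter.mp hp).2]
    simp only [key]
    refine squeeze_zero' (Eventually.of_forall fun N => ?_) ?_ h3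
    · exact div_nonneg (sum_nonneg fun _ _ => vonMangoldt.residueClass_nonneg a _) (by positivity)
    · filter_upwards [eventually_gt_atTop 0] with N hN
      gcongr
      have h6 := Chebyshev.psi_sub_theta_le (x := (N : ℝ)) (by exact_mod_cast hN)
      rw [Chebyshev.psi_sub_theta_eq_sum_not_prime, Nat.floor_natCast] at h6
      refine le_trans (sum_le_sum fun n _ => vonMangoldt.residueClass_le a n) (le_trans ?_ h6)
      apply le_of_eq
      congr 1
  have := h1.sub h2
  simpa using this

/-- The oscillation of the indicator of `n ≡ a (mod q)` around its expected density `1/φ(q)`. -/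
noncomputable def osc {q : ℕ} (a : ZMod q) (n : ℕ) : ℝ :=
  (if (n : ZMod q) = a then 1 else 0) - 1 / (q.totient : ℝ)

lemma abs_osc_le {q : ℕ} [NeZero q] (a : ZMod q) (n : ℕ) : |osc a n| ≤ 1 := by
  have h : (1 : ℝ) ≤ q.totient := by
    exact_mod_cast Nat.totient_pos.mpr (NeZero.pos q)
  have h1 : 1 / (q.totient : ℝ) ≤ 1 := by rw [div_le_one (by linarith)]; exact h
  have h2 : 0 ≤ 1 / (q.totient : ℝ) := by positivity
  unfold osc
  rw [abs_le]
  split_ifs <;> constructor <;> linarith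

/-- The error term in the prime number theorem for the class `a`; the total count of primes is the
case of modulus `1`. -/
lemma sublinear_theta_osc {q : ℕ} [NeZero q] {a : ZMod q} (ha : IsUnit a) :
    Sublinear (fun N => ∑ p ∈ (Icc 1 N).filter Nat.Prime, osc a p * Real.log p) := by
  apply sublinear_of_tendsto
  have h1 := tendsto_theta_residueClass ha
  have h2 := tendsto_theta_residueClass (q := 1) (a := 0) (isUnit_of_subsingleton _)
  have h3 := h1.sub (h2.const_mul (1 / (q.totient : ℝ)))
  simp only [Nat.totient_one, Nat.cast_one, div_one, mul_one, sub_self] at h3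
  refine h3.congr fun N => ?_
  rw [mul_div_assoc', mul_sum, ← sub_div, ← sum_sub_distrib]
  congr 1
  refine sum_congr rfl fun p _ => ?_
  have h4 : ((p : ZMod 1) = 0) := Subsingleton.elim _ _
  rw [if_pos h4, osc]
  split_ifs <;> ring

/-! ### Möbius sums with a coprimality condition -/

open scoped ArithmeticFunction.Moebius
open ArithmeticFunction (moebius)

/-- The indicator of `gcd(n, Q) = 1`. -/
noncomputable def cop (Q n : ℕ) : ℝ := if n.Coprime Q then 1 else 0

lemma abs_moebius_le_one_real (n : ℕ) : |(μ n : ℝ)| ≤ 1 := by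
  exact_mod_cast ArithmeticFunction.abs_moebius_le_one

lemma cop_nonneg (Q n : ℕ) : 0 ≤ cop Q n := by unfold cop; split_ifs <;> norm_num
lemma cop_le_one (Q n : ℕ) : cop Q n ≤ 1 := by unfold cop; split_ifs <;> norm_num

lemma abs_moebius_mul_cop (Q n : ℕ) : |(μ n : ℝ) * cop Q n| ≤ 1 := by
  rw [abs_mul, abs_of_nonneg (cop_nonneg Q n)]
  exact mul_le_one₀ (abs_moebius_le_one_real n) (cop_nonneg _ _) (cop_le_one _ _)

/-- The function `ζ(s) - 1/(s - 1)` with its singularity at `1` removed; the value there is the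
Euler–Mascheroni constant. -/
lemma continuous_zeta_regular :
    Continuous (Function.update (fun s : ℂ => riemannZeta s - 1 / (s - 1)) 1
      (Real.eulerMascheroniConstant : ℂ)) := by
  rw [continuous_iff_continuousAt]
  intro s
  by_cases hs : s = 1
  · subst hs
    rw [continuousAt_update_same]
    exact tendsto_riemannZeta_sub_one_div
  · rw [continuousAt_update_of_ne hs]
    refine (differentiableAt_riemannZeta hs).continuousAt.sub ?_
    exact continuousAt_const.div (by fun_prop) (sub_ne_zero.mpr hs)

/-- `∑_{n ≤ N, (n,Q)=1} μ(n) = o(N)`: apply the Tauberian theorem to `1 + μ(n) 1_{(n,Q)=1} ≥ 0`. -/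
lemma sublinear_moebius_cop (Q : ℕ) [NeZero Q] :
    Sublinear (fun N => ∑ n ∈ Icc 1 N, (μ n : ℝ) * cop Q n) := by
  apply sublinear_of_tendsto
  have hw := wiener_ikehara (fun n => 1 + (μ n : ℝ) * cop Q n)
    (fun n => by have := abs_le.mp (abs_moebius_mul_cop Q n); linarith) 2
    (fun N => ?_) 1
    (fun s => Function.update (fun s : ℂ => riemannZeta s - 1 / (s - 1)) 1
      (Real.eulerMascheroniConstant : ℂ) s +
      (s - 1) / DirichletCharacter.LFunctionTrivChar₁ Q s) ?_ (fun s hs => ?_)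
  · have h2 := hw.sub (tendsto_const_nhds (x := (1 : ℝ)))
    rw [sub_self] at h2
    refine h2.congr' ?_
    filter_upwards [eventually_gt_atTop 0] with N hN
    have : (N : ℝ) ≠ 0 := by exact_mod_cast hN.ne'
    rw [sum_add_distrib]
    simp
    field_simp
    ring
  · calc ∑ k ∈ Icc 1 N, (1 + (μ k : ℝ) * cop Q k) ≤ ∑ k ∈ Icc 1 N, (2 : ℝ) :=
        sum_le_sum fun k _ => by have := abs_le.mp (abs_moebius_mul_cop Q k); linarith
      _ = 2 * N := by simp [mul_comm]
  · refine continuous_zeta_regular.continuousOn.add ?_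
    refine ContinuousOn.div (by fun_prop)
      (DirichletCharacter.differentiable_LFunctionTrivChar₁ Q).continuous.continuousOn ?_
    intro s hs
    by_cases h1 : s = 1
    · subst h1; exact DirichletCharacter.LFunctionTrivChar₁_apply_one_ne_zero Q
    · rw [DirichletCharacter.LFunctionTrivChar₁, Function.update_of_ne h1]
      exact mul_ne_zero (sub_ne_zero.mpr h1)
        (DirichletCharacter.LFunction_ne_zero_of_one_le_re 1 (.inr h1) hs)
  · have h1 : s ≠ 1 := by rintro rfl; simp at hs
    have hL := DirichletCharacter.LSeries.mul_mu_eq_one (1 : DirichletCharacter ℂ Q) hs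
    rw [← DirichletCharacter.LFunction_eq_LSeries _ hs] at hL
    have hne := DirichletCharacter.LFunction_ne_zero_of_one_le_re (1 : DirichletCharacter ℂ Q)
      (.inr h1) hs.le
    rw [Function.update_of_ne h1, DirichletCharacter.LFunctionTrivChar₁, Function.update_of_ne h1,
      ← LSeries_one_eq_riemannZeta hs]
    have hsum : LSeries (fun n => ((1 + (μ n : ℝ) * cop Q n : ℝ) : ℂ)) s =
        LSeries 1 s + LSeries ((fun n : ℕ => (1 : DirichletCharacter ℂ Q) n) *
          (fun n : ℕ => ((μ n : ℤ) : ℂ))) s := by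
      rw [← LSeries_add (LSeriesSummable_one_iff.mpr hs)
        (DirichletCharacter.LSeriesSummable_mul _
          (ArithmeticFunction.LSeriesSummable_moebius_iff.mpr hs))]
      refine LSeries_congr (fun {n} _ => ?_) s
      simp only [cop, Pi.add_apply, Pi.one_apply, Pi.mul_apply]
      by_cases hc : n.Coprime Q
      · rw [MulChar.one_apply ((ZMod.isUnit_iff_coprime n Q).mpr hc), if_pos hc]
        push_cast; ring
      · rw [MulChar.map_nonunit _ (fun h => hc ((ZMod.isUnit_iff_coprime n Q).mp h)), if_neg hc]
        push_cast; ring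
    rw [hsum]
    have hs1 := sub_ne_zero.mpr h1
    have h3 : LSeries ((fun n : ℕ => (1 : DirichletCharacter ℂ Q) n) *
          (fun n : ℕ => ((μ n : ℤ) : ℂ))) s = 1 / DirichletCharacter.LFunction (1 : DirichletCharacter ℂ Q) s := by
      rw [eq_div_iff hne, mul_comm]; exact hL
    rw [h3, DirichletCharacter.LFunctionTrivChar]
    field_simp
    push_cast
    ring

/-- Abel's inequality: an antitone nonnegative weight costs only its first value. -/
lemma abel_inequality (w c : ℕ → ℝ) (a b : ℕ) (B : ℝ) (hB : 0 ≤ B)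
    (hw : ∀ i ∈ Ioc a b, ∀ j ∈ Ioc a b, i ≤ j → w j ≤ w i) (hw0 : ∀ i ∈ Ioc a b, 0 ≤ w i)
    (hc : ∀ t ∈ Ioc a b, |∑ n ∈ Ioc a t, c n| ≤ B) (W : ℝ) (hW : ∀ i ∈ Ioc a b, w i ≤ W)
    (hW0 : 0 ≤ W) :
    |∑ n ∈ Ioc a b, w n * c n| ≤ W * B := by
  rcases le_or_gt b a with hba | hab
  · rw [Ioc_eq_empty (by omega)]; simp; positivity
  -- summation by parts, in the form of an induction on the upper end point
  have key : ∀ t, a + 1 ≤ t → t ≤ b →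
      |∑ n ∈ Ioc a t, w n * c n - w t * ∑ n ∈ Ioc a t, c n| ≤ (W - w t) * B := by
    intro t hat
    induction t, hat using Nat.le_induction with
    | base =>
      intro htb
      have := hW (a + 1) (mem_Ioc.mpr ⟨by omega, htb⟩)
      rw [Nat.Ioc_succ_singleton]
      simp only [sum_singleton, sub_self, abs_zero]
      exact mul_nonneg (by linarith) hB
    | succ t hat ih =>
      intro htb
      have ih' := ih (by omega)
      have ht : t ∈ Ioc a b := mem_Ioc.mpr ⟨by omega, by omega⟩
      have ht1 : t + 1 ∈ Ioc a b := mem_Ioc.mpr ⟨by omega, by omega⟩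
      have hmono := hw t ht (t + 1) ht1 (by omega)
      rw [sum_Ioc_succ_top (by omega), sum_Ioc_succ_top (by omega)]
      have e : ∑ n ∈ Ioc a t, w n * c n + w (t + 1) * c (t + 1)
          - w (t + 1) * (∑ n ∈ Ioc a t, c n + c (t + 1)) =
          (∑ n ∈ Ioc a t, w n * c n - w t * ∑ n ∈ Ioc a t, c n)
          + (w t - w (t + 1)) * ∑ n ∈ Ioc a t, c n := by ring
      rw [e]
      refine (abs_add_le _ _).trans ?_
      rw [abs_mul, abs_of_nonneg (sub_nonneg.mpr hmono)]
      have := mul_le_mul_of_nonneg_left (hc t ht) (sub_nonneg.mpr hmono)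
      linarith
  have hb : b ∈ Ioc a b := mem_Ioc.mpr ⟨hab, le_rfl⟩
  have h1 := key b hab le_rfl
  have h2 : |w b * ∑ n ∈ Ioc a b, c n| ≤ w b * B := by
    rw [abs_mul, abs_of_nonneg (hw0 b hb)]
    exact mul_le_mul_of_nonneg_left (hc b hb) (hw0 b hb)
  have h3 := abs_add_le (∑ n ∈ Ioc a b, w n * c n - w b * ∑ n ∈ Ioc a b, c n)
    (w b * ∑ n ∈ Ioc a b, c n)
  rw [sub_add_cancel] at h3
  linarith

/-! ### Smooth numbers -/

/-- The largest prime factor of `n` (with the value `0` at `n = 0, 1`). -/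
def maxFac (n : ℕ) : ℕ := n.primeFactors.sup id

lemma le_maxFac {n p : ℕ} (hp : p ∈ n.primeFactors) : p ≤ maxFac n := le_sup (f := id) hp

lemma maxFac_le_iff {n y : ℕ} : maxFac n ≤ y ↔ ∀ p ∈ n.primeFactors, p ≤ y := by
  simp [maxFac, Finset.sup_le_iff]

lemma maxFac_mem {n : ℕ} (hn : 2 ≤ n) : maxFac n ∈ n.primeFactors := by
  obtain ⟨p, hp, h⟩ := exists_mem_eq_sup n.primeFactors
    (Nat.nonempty_primeFactors.mpr (by omega)) id
  rw [maxFac, h]; exact hp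

lemma log_eq_sum_primes {n y : ℕ} (hy : maxFac n ≤ y) :
    Real.log n = ∑ p ∈ (Icc 1 y).filter Nat.Prime, n.factorization p * Real.log p := by
  rw [Real.log_nat_eq_sum_factorization, Finsupp.sum_of_support_subset]
  · intro p hp
    rw [Nat.support_factorization] at hp
    have hp' := Nat.prime_of_mem_primeFactors hp
    exact mem_filter.mpr ⟨mem_Icc.mpr ⟨hp'.one_le, maxFac_le_iff.mp hy p hp⟩, hp'⟩
  · simp

lemma factorization_factorial_eq_sum (N p : ℕ) :
    (N.factorial).factorization p = ∑ n ∈ Icc 1 N, n.factorization p := by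
  induction N with
  | zero => simp
  | succ N ih =>
    rw [Nat.factorial_succ, Nat.factorization_mul (by omega) (Nat.factorial_ne_zero N),
      Finsupp.add_apply, ih, sum_Icc_succ_top (by omega), add_comm]

lemma factorization_factorial_le {N p : ℕ} (hp : p.Prime) :
    ((N.factorial).factorization p : ℝ) ≤ 2 * N / p := by
  have := Fact.mk hp
  have h := sub_one_mul_padicValNat_factorial (p := p) N
  rw [← Nat.factorization_def _ hp] at h
  have h2 : (p - 1) * (N.factorial).factorization p ≤ N := by rw [h]; exact Nat.sub_le _ _
  have hp2 := hp.two_le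
  have h3 : p * (N.factorial).factorization p ≤ 2 * N := by
    have : p ≤ 2 * (p - 1) := by omega
    calc _ ≤ 2 * (p - 1) * (N.factorial).factorization p := Nat.mul_le_mul_right _ this
      _ = 2 * ((p - 1) * (N.factorial).factorization p) := by ring
      _ ≤ _ := by omega
  rw [le_div_iff₀ (by exact_mod_cast hp.pos), mul_comm]
  exact_mod_cast h3

lemma le_factorization_factorial {y p : ℕ} (hp : p.Prime) :
    y / p ≤ (y.factorial).factorization p := by
  rw [Nat.factorization_factorial hp (b := Nat.log p y + 2) (by omega)]
  have := single_le_sum (f := fun i => y / p ^ i) (s := Ico 1 (Nat.log p y + 2))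
    (fun _ _ => Nat.zero_le _) (mem_Ico.mpr ⟨le_rfl, by omega⟩ : 1 ∈ Ico 1 (Nat.log p y + 2))
  simpa using this

/-- The upper bound in Mertens' first theorem. -/
lemma sum_log_div_le (y : ℕ) (hy : 1 ≤ y) :
    ∑ p ∈ (Icc 1 y).filter Nat.Prime, Real.log p / p ≤ Real.log y + Real.log 4 := by
  have hypos : (0 : ℝ) < y := by exact_mod_cast hy
  have h1 : Real.log (y.factorial) = ∑ p ∈ (Icc 1 y).filter Nat.Prime,
      (y.factorial).factorization p * Real.log p := by
    apply log_eq_sum_primes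
    rw [maxFac_le_iff]
    intro p hp
    exact (Nat.prime_of_mem_primeFactors hp).dvd_factorial.mp (Nat.dvd_of_mem_primeFactors hp)
  have h2 : Real.log (y.factorial) ≤ y * Real.log y := by
    rw [← Real.log_pow]
    apply Real.log_le_log (by exact_mod_cast Nat.factorial_pos y)
    exact_mod_cast Nat.factorial_le_pow y
  have h3 : ∑ p ∈ (Icc 1 y).filter Nat.Prime, Real.log p ≤ Real.log 4 * y := by
    have := Chebyshev.theta_le_log4_mul_x (x := (y : ℝ)) hypos.le
    rw [Chebyshev.theta, Nat.floor_natCast] at this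
    exact this
  have h4 : y * ∑ p ∈ (Icc 1 y).filter Nat.Prime, Real.log p / p ≤
      ∑ p ∈ (Icc 1 y).filter Nat.Prime, (y.factorial).factorization p * Real.log p +
      ∑ p ∈ (Icc 1 y).filter Nat.Prime, Real.log p := by
    rw [mul_sum, ← sum_add_distrib]
    refine sum_le_sum fun p hp => ?_
    have hp' := (mem_filter.mp hp).2
    have hlog : 0 ≤ Real.log p := Real.log_natCast_nonneg p
    have h5 : (y : ℝ) / p ≤ (y.factorial).factorization p + 1 := by
      have a1 : (y : ℝ) / p < (y / p : ℕ) + 1 := by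
        rw [div_lt_iff₀ (by exact_mod_cast hp'.pos)]
        exact_mod_cast Nat.lt_mul_of_div_lt (Nat.lt_succ_self (y / p)) hp'.pos
      have a2 : ((y / p : ℕ) : ℝ) ≤ (y.factorial).factorization p := by
        exact_mod_cast le_factorization_factorial hp'
      linarith
    calc (y : ℝ) * (Real.log p / p) = y / p * Real.log p := by ring
      _ ≤ ((y.factorial).factorization p + 1) * Real.log p := by gcongr
      _ = _ := by ring
  have h6 : y * ∑ p ∈ (Icc 1 y).filter Nat.Prime, Real.log p / p ≤
      y * (Real.log y + Real.log 4) := by linarith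
  exact le_of_mul_le_mul_left h6 hypos

/-- Integers without prime factors above `y`: since `∑ log n` over them is at most
`∑_{p ≤ y} v_p(N!) log p`, they are rare as soon as `log y` is small compared with `log N`. -/
lemma smooth_count (N y : ℕ) (hy : 1 ≤ y) (hN : 2 ≤ N) :
    (((Icc 1 N).filter (fun n => maxFac n ≤ y)).card : ℝ) ≤
      √N + 4 * N * (Real.log y + Real.log 4) / Real.log N := by
  have hNpos : (0 : ℝ) < N := by exact_mod_cast (by omega : 0 < N)
  have hlogN : 0 < Real.log N := Real.log_pos (by exact_mod_cast (by omega : 1 < N))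
  set S := (Icc 1 N).filter (fun n => maxFac n ≤ y) with hS
  have h1 : ∑ n ∈ S, Real.log n ≤ 2 * N * (Real.log y + Real.log 4) := by
    calc ∑ n ∈ S, Real.log n
        = ∑ n ∈ S, ∑ p ∈ (Icc 1 y).filter Nat.Prime, n.factorization p * Real.log p :=
          sum_congr rfl fun n hn => log_eq_sum_primes (mem_filter.mp hn).2
      _ ≤ ∑ n ∈ Icc 1 N, ∑ p ∈ (Icc 1 y).filter Nat.Prime, n.factorization p * Real.log p := by
          refine sum_le_sum_of_subset_of_nonneg (filter_subset _ _) fun n _ _ => ?_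
          exact sum_nonneg fun p _ => mul_nonneg (by positivity) (Real.log_natCast_nonneg p)
      _ = ∑ p ∈ (Icc 1 y).filter Nat.Prime, (N.factorial).factorization p * Real.log p := by
          rw [sum_comm]
          refine sum_congr rfl fun p _ => ?_
          rw [← sum_mul, factorization_factorial_eq_sum]
          push_cast; rfl
      _ ≤ ∑ p ∈ (Icc 1 y).filter Nat.Prime, 2 * N / p * Real.log p := by
          refine sum_le_sum fun p hp => ?_
          exact mul_le_mul_of_nonneg_right (factorization_factorial_le (mem_filter.mp hp).2)
            (Real.log_natCast_nonneg p)
      _ = 2 * N * ∑ p ∈ (Icc 1 y).filter Nat.Prime, Real.log p / p := by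
          rw [mul_sum]; exact sum_congr rfl fun p _ => by ring
      _ ≤ _ := by gcongr; exact sum_log_div_le y hy
  have h2 : (S.card : ℝ) ≤ ∑ n ∈ S, ((if (n : ℝ) ≤ √N then (1 : ℝ) else 0) +
      2 / Real.log N * Real.log n) := by
    rw [card_eq_sum_ones]; push_cast
    refine sum_le_sum fun n hn => ?_
    have hn1 := (mem_Icc.mp (mem_filter.mp hn).1).1
    split_ifs with h
    · have : 0 ≤ Real.log n := Real.log_natCast_nonneg n
      have : 0 ≤ 2 / Real.log N * Real.log n := by positivity
      linarith
    · push Not at h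
      have h3 := Real.log_le_log (Real.sqrt_pos.mpr hNpos) h.le
      rw [Real.log_sqrt hNpos.le] at h3
      rw [zero_add, div_mul_eq_mul_div, le_div_iff₀ hlogN]
      linarith
  have h3 : ∑ n ∈ S, (if (n : ℝ) ≤ √N then (1 : ℝ) else 0) ≤ √N := by
    rw [← sum_filter, sum_const, nsmul_eq_mul, mul_one]
    have : S.filter (fun n : ℕ => (n : ℝ) ≤ √(N : ℝ)) ⊆ Icc 1 ⌊√(N : ℝ)⌋₊ := by
      intro n hn
      have hn' := mem_filter.mp hn
      exact mem_Icc.mpr ⟨(mem_Icc.mp (mem_filter.mp hn'.1).1).1, Nat.le_floor hn'.2⟩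
    have h4 := card_le_card this
    rw [Nat.card_Icc, Nat.add_sub_cancel] at h4
    calc _ ≤ ((⌊√(N : ℝ)⌋₊ : ℕ) : ℝ) := by exact_mod_cast h4
      _ ≤ _ := Nat.floor_le (Real.sqrt_nonneg _)
  rw [sum_add_distrib, ← mul_sum] at h2
  have h4 : 2 / Real.log N * ∑ n ∈ S, Real.log n ≤
      4 * N * (Real.log y + Real.log 4) / Real.log N := by
    calc _ ≤ 2 / Real.log N * (2 * N * (Real.log y + Real.log 4)) := by gcongr
      _ = _ := by ring
  linarith

/-- For a fixed smoothness bound the smooth numbers have density zero. -/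
lemma sublinear_smooth (y : ℕ) (hy : 1 ≤ y) :
    Sublinear (fun N => (((Icc 1 N).filter (fun n => maxFac n ≤ y)).card : ℝ)) := by
  apply sublinear_of_tendsto
  have h1 : Tendsto (fun N : ℕ => 1 / √(N : ℝ) + 4 * (Real.log y + Real.log 4) / Real.log N) atTop
      (nhds (0 + 0)) := by
    refine Tendsto.add ?_ ?_
    · exact (tendsto_const_nhds.div_atTop
        (Real.tendsto_sqrt_atTop.comp tendsto_natCast_atTop_atTop))
    · exact (tendsto_const_nhds.div_atTop
        (Real.tendsto_log_atTop.comp tendsto_natCast_atTop_atTop))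
  rw [add_zero] at h1
  refine squeeze_zero' (Eventually.of_forall fun N => by positivity) ?_ h1
  filter_upwards [eventually_ge_atTop 2] with N hN
  have hNpos : (0 : ℝ) < N := by exact_mod_cast (by omega : 0 < N)
  have hs : 0 < √(N : ℝ) := Real.sqrt_pos.mpr hNpos
  have hlogN : 0 < Real.log N := Real.log_pos (by exact_mod_cast (by omega : 1 < N))
  rw [div_le_iff₀ hNpos]
  refine (smooth_count N y hy hN).trans (le_of_eq ?_)
  have := Real.mul_self_sqrt hNpos.le
  field_simp
  linear_combination Real.log N * this

/-! ### Equidistribution of the largest prime factor -/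

lemma maxFac_mul_prime {m p : ℕ} (hm : 1 ≤ m) (hp : p.Prime) (h : maxFac m ≤ p) :
    maxFac (m * p) = p := by
  apply le_antisymm
  · rw [maxFac_le_iff]
    intro r hr
    rw [Nat.primeFactors_mul (by omega) hp.ne_zero, mem_union, hp.primeFactors, mem_singleton] at hr
    rcases hr with hr | hr
    · exact (le_maxFac hr).trans h
    · exact hr.le
  · exact le_maxFac (Nat.mem_primeFactors.mpr
      ⟨hp, Dvd.intro_left m rfl, Nat.mul_ne_zero (by omega) hp.ne_zero⟩)

lemma maxFac_one : maxFac 1 = 0 := by simp [maxFac]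

/-- Sorting integers with `P(n) > y` as `n = m p` with `p = P(n)`. -/
lemma sum_maxFac_eq (N y : ℕ) (F : ℕ → ℝ) :
    ∑ n ∈ (Icc 1 N).filter (fun n => y < maxFac n), F (maxFac n) =
      ∑ m ∈ Icc 1 N, ∑ p ∈ (Ioc (max y (maxFac m - 1)) (N / m)).filter Nat.Prime, F p := by
  rw [sum_sigma']
  refine sum_nbij' (fun n => ⟨n / maxFac n, maxFac n⟩) (fun x => x.1 * x.2) ?_ ?_ ?_ ?_ ?_
  · intro n hn
    simp only [mem_filter, mem_Icc] at hn
    obtain ⟨⟨hn1, hnN⟩, hy⟩ := hn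
    have hn2 : 2 ≤ n := by
      by_contra h
      have : n = 1 := by omega
      subst this
      rw [maxFac_one] at hy; omega
    have hmem := maxFac_mem hn2
    have hpr := Nat.prime_of_mem_primeFactors hmem
    have hdvd := Nat.dvd_of_mem_primeFactors hmem
    have hle : maxFac n ≤ n := Nat.le_of_dvd (by omega) hdvd
    have hq : 1 ≤ n / maxFac n := Nat.div_pos hle hpr.pos
    simp only [mem_sigma, mem_filter, mem_Icc, mem_Ioc]
    refine ⟨⟨hq, (Nat.div_le_self _ _).trans hnN⟩, ⟨max_lt hy ?_, ?_⟩, hpr⟩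
    · have : maxFac (n / maxFac n) ≤ maxFac n := by
        rw [maxFac_le_iff]
        intro p hp
        exact le_maxFac (Nat.primeFactors_mono (Nat.div_dvd_of_dvd hdvd) (by omega) hp)
      have := hpr.pos
      omega
    · rw [Nat.le_div_iff_mul_le hq, Nat.mul_div_cancel' hdvd]; exact hnN
  · rintro ⟨m, p⟩ h
    simp only [mem_sigma, mem_filter, mem_Icc, mem_Ioc, max_lt_iff] at h ⊢
    obtain ⟨⟨hm1, hmN⟩, ⟨⟨hyp, hmp⟩, hpN⟩, hp⟩ := h
    rw [maxFac_mul_prime hm1 hp (by omega)]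
    refine ⟨⟨Nat.mul_pos hm1 hp.pos, ?_⟩, hyp⟩
    rw [Nat.le_div_iff_mul_le hm1] at hpN
    rw [mul_comm]; exact hpN
  · intro n hn
    simp only [mem_filter, mem_Icc] at hn
    have hn2 : 2 ≤ n := by
      by_contra h
      have : n = 1 := by omega
      subst this
      rw [maxFac_one] at hn; omega
    exact Nat.div_mul_cancel (Nat.dvd_of_mem_primeFactors (maxFac_mem hn2))
  · rintro ⟨m, p⟩ h
    simp only [mem_sigma, mem_filter, mem_Icc, mem_Ioc, max_lt_iff] at h ⊢
    obtain ⟨⟨hm1, hmN⟩, ⟨⟨hyp, hmp⟩, hpN⟩, hp⟩ := h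
    rw [maxFac_mul_prime hm1 hp (by omega), Nat.mul_div_cancel _ hp.pos]
  · intro n _; rfl

/-- A sum of `osc a` over the primes in an interval beyond `y`, from the corresponding bound for
the logarithmically weighted sum. -/
lemma abs_sum_osc_primes_le {q : ℕ} (a : ZMod q) {η C : ℝ} (hη : 0 ≤ η) (hC : 0 ≤ C)
    (hθ : ∀ N : ℕ, |∑ p ∈ (Icc 1 N).filter Nat.Prime, osc a p * Real.log p| ≤ η * N + C)
    {y A B : ℕ} (hy : 2 ≤ y) (hyA : y ≤ A) :
    |∑ p ∈ (Ioc A B).filter Nat.Prime, osc a p| ≤ 2 * (η * B + C) / Real.log y := by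
  have hlogy : 0 < Real.log y := Real.log_pos (by exact_mod_cast (by omega : 1 < y))
  have h := abel_inequality (fun n => 1 / Real.log n)
    (fun n => if n.Prime then osc a n * Real.log n else 0) A B (2 * (η * B + C)) (by positivity)
    ?_ ?_ ?_ (1 / Real.log y) ?_ (by positivity)
  · rw [sum_filter]
    refine le_trans (le_of_eq ?_) (h.trans (le_of_eq (by ring)))
    congr 1
    refine sum_congr rfl fun n hn => ?_
    rw [mem_Ioc] at hn
    have : 0 < Real.log n := Real.log_pos (by exact_mod_cast (by omega : 1 < n))
    split_ifs
    · field_simp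
    · simp
  · intro i hi j hj hij
    rw [mem_Ioc] at hi hj
    have : 0 < Real.log i := Real.log_pos (by exact_mod_cast (by omega : 1 < i))
    apply one_div_le_one_div_of_le this
    exact Real.log_le_log (by exact_mod_cast (by omega : 0 < i)) (by exact_mod_cast hij)
  · intro i hi
    have := Real.log_natCast_nonneg i
    positivity
  · intro t ht
    rw [mem_Ioc] at ht
    rw [← sum_filter]
    have e : ∑ p ∈ (Ioc A t).filter Nat.Prime, osc a p * Real.log p =
        ∑ p ∈ (Icc 1 t).filter Nat.Prime, osc a p * Real.log p -
        ∑ p ∈ (Icc 1 A).filter Nat.Prime, osc a p * Real.log p := by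
      rw [eq_sub_iff_add_eq, ← sum_union]
      · rw [← filter_union]
        congr 2
        ext n; simp only [mem_union, mem_Ioc, mem_Icc]; omega
      · apply disjoint_filter_filter
        rw [disjoint_left]; intro n; simp only [mem_Ioc, mem_Icc]; omega
    rw [e]
    refine (abs_sub _ _).trans ?_
    have h1 := hθ t
    have h2 := hθ A
    have h3 : (t : ℝ) ≤ B := by exact_mod_cast ht.2
    have h4 : (A : ℝ) ≤ B := by exact_mod_cast (by omega : A ≤ B)
    have := mul_le_mul_of_nonneg_left h3 hη
    have := mul_le_mul_of_nonneg_left h4 hη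
    linarith
  · intro i hi
    rw [mem_Ioc] at hi
    apply one_div_le_one_div_of_le hlogy
    exact Real.log_le_log (by exact_mod_cast (by omega : 0 < y))
      (by exact_mod_cast (by omega : y ≤ i))

lemma sum_inv_le (N : ℕ) : ∑ m ∈ Icc 1 N, (1 : ℝ) / m ≤ 1 + Real.log N := by
  have := harmonic_le_one_add_log N
  rw [harmonic_eq_sum_Icc] at this
  push_cast at this
  simpa using this

/-- The sum of `osc a (P(n))` over the `n ≤ N` with `P(n) > y`, estimated by summing over `p = P(n)`
for each fixed cofactor `m = n / p`. -/
lemma abs_sum_osc_rough_le {q : ℕ} (a : ZMod q) {η C : ℝ} (hη : 0 ≤ η) (hC : 0 ≤ C)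
    (hθ : ∀ N : ℕ, |∑ p ∈ (Icc 1 N).filter Nat.Prime, osc a p * Real.log p| ≤ η * N + C)
    {y N : ℕ} (hy : 2 ≤ y) :
    |∑ n ∈ (Icc 1 N).filter (fun n => y < maxFac n), osc a (maxFac n)| ≤
      N * (2 * (η * (1 + Real.log N) + C) / Real.log y) := by
  have hlogy : 0 < Real.log y := Real.log_pos (by exact_mod_cast (by omega : 1 < y))
  rw [sum_maxFac_eq]
  refine (abs_sum_le_sum_abs _ _).trans ?_
  have hb : ∀ m ∈ Icc 1 N,
      |∑ p ∈ (Ioc (max y (maxFac m - 1)) (N / m)).filter Nat.Prime, osc a p| ≤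
        2 * η * N / Real.log y * (1 / m) + (if m ≤ N / y then 2 * C / Real.log y else 0) := by
    intro m hm
    have hm1 := (mem_Icc.mp hm).1
    split_ifs with h
    · refine (abs_sum_osc_primes_le a hη hC hθ hy (le_max_left _ _)).trans ?_
      have h1 : ((N / m : ℕ) : ℝ) ≤ N / m := Nat.cast_div_le
      calc 2 * (η * (N / m : ℕ) + C) / Real.log y ≤ 2 * (η * (N / m) + C) / Real.log y := by
            gcongr
        _ = _ := by ring
    · rw [Ioc_eq_empty, filter_empty, sum_empty, abs_zero]
      · positivity
      · intro h2
        have h3 : y < N / m := (le_max_left _ _).trans_lt h2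
        apply h
        have h4 := (Nat.le_div_iff_mul_le hm1).mp h3.le
        rw [Nat.le_div_iff_mul_le (by omega), mul_comm]; exact h4
  refine (sum_le_sum hb).trans ?_
  rw [sum_add_distrib, ← mul_sum, ← sum_filter, sum_const, nsmul_eq_mul]
  have h1 : (((Icc 1 N).filter (fun m => m ≤ N / y)).card : ℝ) ≤ N := by
    have := card_filter_le (Icc 1 N) (fun m => m ≤ N / y)
    rw [Nat.card_Icc, Nat.add_sub_cancel] at this
    exact_mod_cast this
  calc _ ≤ 2 * η * N / Real.log y * (1 + Real.log N) + N * (2 * C / Real.log y) := by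
        gcongr; exact sum_inv_le N
    _ = _ := by ring

/-- The largest prime factor is equidistributed among the reduced residue classes. -/
lemma sublinear_osc_maxFac {q : ℕ} [NeZero q] {a : ZMod q} (ha : IsUnit a) :
    Sublinear (fun N => ∑ n ∈ Icc 1 N, osc a (maxFac n)) := by
  apply sublinear_of_tendsto
  rw [Metric.tendsto_nhds]
  intro δ hδ
  -- `y = N ^ ε` separates smooth from rough integers; `η` is the quality needed in the prime sum
  set ε : ℝ := δ / 16 with hε
  have hεpos : 0 < ε := by positivity
  set η : ℝ := δ * ε / 16 with hη
  have hηpos : 0 < η := by positivity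
  obtain ⟨C, hC, hθ⟩ := sublinear_theta_osc ha η hηpos
  have hlog : Tendsto (fun N : ℕ => Real.log N) atTop atTop :=
    Real.tendsto_log_atTop.comp tendsto_natCast_atTop_atTop
  have hlim : Tendsto (fun N : ℕ => 1 / √(N : ℝ) + 4 * ε + 4 * Real.log 4 / Real.log N +
      4 / ε * (η + C) / Real.log N + 4 * η / ε) atTop (nhds (0 + 4 * ε + 0 + 0 + 4 * η / ε)) := by
    refine Tendsto.add (Tendsto.add (Tendsto.add (Tendsto.add ?_ tendsto_const_nhds) ?_) ?_)
      tendsto_const_nhds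
    · exact (tendsto_const_nhds.div_atTop
        (Real.tendsto_sqrt_atTop.comp tendsto_natCast_atTop_atTop))
    · exact tendsto_const_nhds.div_atTop hlog
    · exact tendsto_const_nhds.div_atTop hlog
  have hval : 0 + 4 * ε + 0 + 0 + 4 * η / ε < δ := by
    rw [hη]; field_simp; rw [hε]; linarith
  have hpow : Tendsto (fun N : ℕ => (N : ℝ) ^ ε) atTop atTop :=
    (tendsto_rpow_atTop hεpos).comp tendsto_natCast_atTop_atTop
  filter_upwards [hlim.eventually (gt_mem_nhds hval), eventually_ge_atTop 2,
    hpow.eventually_ge_atTop 2, hlog.eventually_ge_atTop (2 * Real.log 2 / ε)] with N hN1 hN2 hN3 hN4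
  have hNpos : (0 : ℝ) < N := by exact_mod_cast (by omega : 0 < N)
  have hlogN : 0 < Real.log N := Real.log_pos (by exact_mod_cast (by omega : 1 < N))
  set y : ℕ := ⌊(N : ℝ) ^ ε⌋₊ with hy
  have hy2 : 2 ≤ y := Nat.le_floor (by exact_mod_cast hN3)
  have hypos : (0 : ℝ) < y := by exact_mod_cast (by omega : 0 < y)
  have hyle : (y : ℝ) ≤ (N : ℝ) ^ ε := Nat.floor_le (by positivity)
  have hylt : (N : ℝ) ^ ε < y + 1 := Nat.lt_floor_add_one _
  have hlogy1 : Real.log y ≤ ε * Real.log N := by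
    rw [← Real.log_rpow hNpos]; exact Real.log_le_log hypos hyle
  have hlogy2 : ε / 2 * Real.log N ≤ Real.log y := by
    have h1 : (N : ℝ) ^ ε ≤ 2 * y := by
      have : (1 : ℝ) ≤ y := by exact_mod_cast (by omega : 1 ≤ y)
      linarith
    have h2 := Real.log_le_log (by positivity) h1
    rw [Real.log_rpow hNpos, Real.log_mul (by norm_num) hypos.ne'] at h2
    rw [div_le_iff₀ hεpos] at hN4
    linarith
  rw [Real.dist_eq, sub_zero, abs_div, abs_of_pos hNpos, div_lt_iff₀ hNpos,
    ← sum_filter_add_sum_filter_not (Icc 1 N) (fun n => maxFac n ≤ y)]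
  simp only [not_le]
  have hA : |∑ n ∈ (Icc 1 N).filter (fun n => maxFac n ≤ y), osc a (maxFac n)| ≤
      N * (1 / √(N : ℝ) + 4 * ε + 4 * Real.log 4 / Real.log N) := by
    refine (abs_sum_le_sum_abs _ _).trans ?_
    refine (sum_le_sum (g := fun _ => (1 : ℝ)) fun n _ => abs_osc_le a _).trans ?_
    rw [sum_const, nsmul_eq_mul, mul_one]
    refine (smooth_count N y (by omega) hN2).trans ?_
    have h1 : √(N : ℝ) = N * (1 / √(N : ℝ)) := by
      have := Real.mul_self_sqrt hNpos.le
      have h5 : 0 < √(N : ℝ) := Real.sqrt_pos.mpr hNpos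
      field_simp; linarith
    have h2 : 4 * N * (Real.log y + Real.log 4) / Real.log N ≤
        4 * N * (ε * Real.log N + Real.log 4) / Real.log N := by gcongr
    have h3 : 4 * N * (ε * Real.log N + Real.log 4) / Real.log N =
        N * (4 * ε + 4 * Real.log 4 / Real.log N) := by field_simp
    rw [h3] at h2
    calc _ ≤ N * (1 / √(N : ℝ)) + N * (4 * ε + 4 * Real.log 4 / Real.log N) := by
          rw [← h1]; linarith
      _ = _ := by ring
  have hB : |∑ n ∈ (Icc 1 N).filter (fun n => y < maxFac n), osc a (maxFac n)| ≤
      N * (4 / ε * (η + C) / Real.log N + 4 * η / ε) := by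
    refine (abs_sum_osc_rough_le a hηpos.le hC hθ hy2).trans ?_
    gcongr
    calc 2 * (η * (1 + Real.log N) + C) / Real.log y
        ≤ 2 * (η * (1 + Real.log N) + C) / (ε / 2 * Real.log N) := by gcongr
      _ = _ := by field_simp; ring
  refine (abs_add_le _ _).trans_lt ?_
  have := mul_lt_mul_of_pos_right hN1 hNpos
  linarith

/-! ### The theorem of Axer -/

/-- Axer's theorem: bounded coefficients with sublinear summatory function. -/
lemma axer (a : ℕ → ℝ) (ha : ∀ n, |a n| ≤ 1) (hA : Sublinear (fun N => ∑ n ∈ Icc 1 N, a n)) :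
    Sublinear (fun N => ∑ n ∈ Icc 1 N, a n * ((N : ℝ) / n - (N / n : ℕ))) := by
  intro ε hε
  -- indices `n ≤ N / K` are estimated trivially; on the rest the weights are at most `K`
  obtain ⟨K, hK⟩ := exists_nat_gt (2 / ε)
  have hKpos : (0 : ℝ) < K := lt_trans (by positivity) hK
  have hKpos' : 0 < K := by exact_mod_cast hKpos
  obtain ⟨C, hC, hAC⟩ := hA (ε / (8 * K)) (by positivity)
  refine ⟨4 * K * C, by positivity, fun N => ?_⟩
  obtain ⟨b, hb⟩ : ∃ b, b = N / K := ⟨_, rfl⟩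
  have hbN : b ≤ N := hb ▸ Nat.div_le_self _ _
  have hbK0 : (b : ℝ) ≤ N / K := hb ▸ Nat.cast_div_le
  have hbK1 : ∀ i, b < i → N < i * K := fun i hi => Nat.lt_mul_of_div_lt (hb ▸ hi) hKpos'
  clear hb
  have hsplit : ∀ g : ℕ → ℝ, ∑ n ∈ Icc 1 N, g n = ∑ n ∈ Icc 1 b, g n + ∑ n ∈ Ioc b N, g n := by
    intro g
    rw [← sum_union]
    · congr 1; ext n; simp only [mem_union, mem_Ioc, mem_Icc]; omega
    · rw [disjoint_left]; intro n; simp only [mem_Ioc, mem_Icc]; omega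
  have hpart : ∀ t ∈ Ioc b N, |∑ n ∈ Ioc b t, a n| ≤ 2 * (ε / (8 * K) * N + C) := by
    intro t ht
    rw [mem_Ioc] at ht
    have e : ∑ n ∈ Ioc b t, a n = ∑ n ∈ Icc 1 t, a n - ∑ n ∈ Icc 1 b, a n := by
      rw [eq_sub_iff_add_eq, ← sum_union]
      · congr 1; ext n; simp only [mem_union, mem_Ioc, mem_Icc]; omega
      · rw [disjoint_left]; intro n; simp only [mem_Ioc, mem_Icc]; omega
    rw [e]
    refine (abs_sub _ _).trans ?_
    have h3 : (t : ℝ) ≤ N := by exact_mod_cast ht.2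
    have h4 : (b : ℝ) ≤ N := by exact_mod_cast hbN
    have h5 : 0 ≤ ε / (8 * K) := by positivity
    have := mul_le_mul_of_nonneg_left h3 h5
    have := mul_le_mul_of_nonneg_left h4 h5
    have := hAC t
    have := hAC b
    linarith
  have hle : ∀ i ∈ Ioc b N, (N : ℝ) / i ≤ K := by
    intro i hi
    rw [mem_Ioc] at hi
    have h1 : N < K * i := by
      rw [mul_comm]; exact hbK1 i hi.1
    rw [div_le_iff₀ (by exact_mod_cast (by omega : 0 < i))]
    exact_mod_cast h1.le
  have h1 := abel_inequality (fun n => (N : ℝ) / n) a b N (2 * (ε / (8 * K) * N + C))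
    (by positivity) (fun i hi j _ hij => by
      rw [mem_Ioc] at hi
      have : (0 : ℝ) < i := by exact_mod_cast (by omega : 0 < i)
      have : (i : ℝ) ≤ j := by exact_mod_cast hij
      gcongr) (fun i _ => by positivity) hpart K hle hKpos.le
  have h2 := abel_inequality (fun n => ((N / n : ℕ) : ℝ)) a b N (2 * (ε / (8 * K) * N + C))
    (by positivity) (fun i hi j _ hij => by
      rw [mem_Ioc] at hi
      exact_mod_cast Nat.div_le_div_left hij (by omega)) (fun i _ => by positivity) hpart K
    (fun i hi => (Nat.cast_div_le).trans (hle i hi)) hKpos.le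
  have h3 : |∑ n ∈ Icc 1 b, a n * ((N : ℝ) / n - (N / n : ℕ))| ≤ b := by
    refine (abs_sum_le_sum_abs _ _).trans ?_
    calc _ ≤ ∑ n ∈ Icc 1 b, (1 : ℝ) := by
          refine sum_le_sum fun n hn => ?_
          have hn1 := (mem_Icc.mp hn).1
          have hnpos : (0 : ℝ) < n := by exact_mod_cast hn1
          rw [abs_mul]
          refine mul_le_one₀ (ha n) (abs_nonneg _) ?_
          have e1 : ((N / n : ℕ) : ℝ) ≤ N / n := Nat.cast_div_le
          have e2 : (N : ℝ) / n < (N / n : ℕ) + 1 := by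
            rw [div_lt_iff₀ hnpos]
            exact_mod_cast Nat.lt_mul_of_div_lt (Nat.lt_succ_self (N / n)) hn1
          rw [abs_le]; constructor <;> linarith
      _ = b := by simp
  have hbK : (b : ℝ) ≤ ε / 2 * N := by
    calc (b : ℝ) ≤ N / K := hbK0
      _ ≤ ε / 2 * N := by
        rw [div_le_iff₀ hKpos]
        rw [div_lt_iff₀ hε] at hK
        have : (0 : ℝ) ≤ N := by positivity
        nlinarith
  change |∑ n ∈ Icc 1 N, a n * ((N : ℝ) / n - (N / n : ℕ))| ≤ _
  rw [hsplit]
  have e : ∑ n ∈ Ioc b N, a n * ((N : ℝ) / n - (N / n : ℕ)) =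
      ∑ n ∈ Ioc b N, (N : ℝ) / n * a n - ∑ n ∈ Ioc b N, ((N / n : ℕ) : ℝ) * a n := by
    rw [← sum_sub_distrib]; exact sum_congr rfl fun n _ => by ring
  rw [e]
  have h4 := abs_add_le (∑ n ∈ Icc 1 b, a n * ((N : ℝ) / n - (N / n : ℕ)))
    (∑ n ∈ Ioc b N, (N : ℝ) / n * a n - ∑ n ∈ Ioc b N, ((N / n : ℕ) : ℝ) * a n)
  have h5 := abs_sub (∑ n ∈ Ioc b N, (N : ℝ) / n * a n) (∑ n ∈ Ioc b N, ((N / n : ℕ) : ℝ) * a n)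
  have h6 : (K : ℝ) * (2 * (ε / (8 * K) * N + C)) = ε / 4 * N + 2 * K * C := by
    field_simp; ring
  rw [h6] at h1 h2
  linarith

lemma sum_mul_floor (a : ℕ → ℝ) (N : ℕ) :
    ∑ n ∈ Icc 1 N, a n * (N / n : ℕ) = ∑ m ∈ Icc 1 N, ∑ d ∈ m.divisors, a d := by
  have h1 : ∀ m ∈ Icc 1 N, ∑ d ∈ m.divisors, a d = ∑ d ∈ Icc 1 N, if d ∣ m then a d else 0 := by
    intro m hm
    rw [mem_Icc] at hm
    rw [← sum_filter]
    congr 1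
    ext d
    simp only [Nat.mem_divisors, mem_filter, mem_Icc]
    constructor
    · rintro ⟨h, _⟩
      exact ⟨⟨Nat.pos_of_dvd_of_pos h hm.1, (Nat.le_of_dvd hm.1 h).trans hm.2⟩, h⟩
    · rintro ⟨_, h⟩
      exact ⟨h, by omega⟩
  rw [sum_congr rfl h1, sum_comm]
  refine sum_congr rfl fun d _ => ?_
  rw [← sum_filter, sum_const, nsmul_eq_mul, mul_comm]
  congr 2
  exact (Nat.Ioc_filter_dvd_card_eq_div N d).symm

/-- Passage from the mean value of `a * 1` to the sum of the series `∑ a(n) / n`. -/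
lemma tendsto_sum_div (a : ℕ → ℝ) (ha : ∀ n, |a n| ≤ 1)
    (hA : Sublinear (fun N => ∑ n ∈ Icc 1 N, a n)) (c : ℝ)
    (h : Sublinear (fun N => ∑ m ∈ Icc 1 N, ((∑ d ∈ m.divisors, a d) - c))) :
    Tendsto (fun N => ∑ n ∈ Icc 1 N, a n / n) atTop (nhds c) := by
  have h1 := (axer a ha hA).tendsto
  have h2 := h.tendsto
  have h3 := (h1.add h2).add_const c
  simp only [add_zero, zero_add] at h3
  refine h3.congr' ?_
  filter_upwards [eventually_gt_atTop 0] with N hN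
  have hNpos : (N : ℝ) ≠ 0 := by exact_mod_cast hN.ne'
  rw [sum_sub_distrib, ← sum_mul_floor]
  simp only [mul_sub, sum_sub_distrib, sum_const, Nat.card_Icc, nsmul_eq_mul]
  have e : ∑ n ∈ Icc 1 N, a n * ((N : ℝ) / n) = N * ∑ n ∈ Icc 1 N, a n / n := by
    rw [mul_sum]; exact sum_congr rfl fun n _ => by ring
  rw [e]
  rw [Nat.add_sub_cancel]
  field_simp
  ring

/-! ### Möbius sums weighted by the least prime factor -/

/-- `φ(Y!)/Y! → 0`, because `∑ 1/p` diverges. -/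
lemma tendsto_totient_factorial_div :
    Tendsto (fun Y : ℕ => (Nat.totient Y.factorial : ℝ) / Y.factorial) atTop (nhds 0) := by
  have h1 := (not_summable_iff_tendsto_nat_atTop_of_nonneg (fun n =>
    Set.indicator_nonneg (fun n _ => by positivity) n)).mp not_summable_one_div_on_primes
  have h2 := Real.tendsto_exp_neg_atTop_nhds_zero.comp (h1.comp (tendsto_add_atTop_nat 1))
  refine squeeze_zero (fun Y => by positivity) (fun Y => ?_) h2
  have hpos : (0 : ℝ) < Y.factorial := by exact_mod_cast Nat.factorial_pos Y
  have h3 : (Nat.totient Y.factorial : ℝ) =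
      Y.factorial * ∏ p ∈ Y.factorial.primeFactors, (1 - (p : ℝ)⁻¹) := by
    have h := congrArg (fun x : ℚ => (x : ℝ)) (Nat.totient_eq_mul_prod_factors Y.factorial)
    push_cast at h
    exact h
  rw [h3, mul_div_cancel_left₀ _ hpos.ne']
  have h4 : Y.factorial.primeFactors = (range (Y + 1)).filter Nat.Prime := by
    ext p
    rw [Nat.mem_primeFactors, mem_filter, mem_range]
    constructor
    · rintro ⟨hp, hd, _⟩
      exact ⟨by have := hp.dvd_factorial.mp hd; omega, hp⟩
    · rintro ⟨hp, hpr⟩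
      exact ⟨hpr, hpr.dvd_factorial.mpr (by omega), Nat.factorial_ne_zero Y⟩
  rw [h4]
  simp only [Function.comp]
  have h5 : ∑ i ∈ range (Y + 1), Set.indicator {p | Nat.Prime p} (fun n : ℕ => (1 : ℝ) / n) i =
      ∑ p ∈ (range (Y + 1)).filter Nat.Prime, (1 : ℝ) / p := by
    rw [sum_filter]
    exact sum_congr rfl fun i _ => by simp [Set.indicator_apply]
  rw [h5, ← sum_neg_distrib, Real.exp_sum]
  refine prod_le_prod (fun p hp => ?_) (fun p hp => ?_)
  · have : (1 : ℝ) ≤ p := by exact_mod_cast (mem_filter.mp hp).2.one_le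
    have := inv_le_one_of_one_le₀ this
    linarith
  · have := Real.add_one_le_exp (-(1 / (p : ℝ)))
    rw [one_div] at this ⊢
    linarith

lemma cop_factorial {e : ℕ} (he : e ≠ 1) (j : ℕ) :
    cop j.factorial e = if j < e.minFac then 1 else 0 := by
  unfold cop
  simp only [Nat.coprime_factorial_iff he]

lemma cop_one_right (Q : ℕ) : cop Q 1 = 1 := by simp [cop]

/-- Detecting the value of the least prime factor by coprimality conditions. -/
lemma sum_cop_factorial (f : ℕ → ℝ) (D e : ℕ) :
    ∑ j ∈ Icc 1 D, f j * (cop (j - 1).factorial e - cop j.factorial e) =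
      if e ≠ 1 ∧ e.minFac ≤ D then f e.minFac else 0 := by
  by_cases he : e = 1
  · subst he; simp [cop_one_right]
  have h1 : ∀ j ∈ Icc 1 D, f j * (cop (j - 1).factorial e - cop j.factorial e) =
      if j = e.minFac then f e.minFac else 0 := by
    intro j hj
    rw [mem_Icc] at hj
    rw [cop_factorial he, cop_factorial he]
    by_cases h : j = e.minFac
    · rw [if_pos h, if_pos (by omega), if_neg (by omega), h]; ring
    · rw [if_neg h]
      by_cases h2 : j < e.minFac
      · rw [if_pos h2, if_pos (by omega)]; ring
      · rw [if_neg h2, if_neg (by omega)]; ring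
  rw [sum_congr rfl h1, sum_ite_eq']
  have := e.minFac_pos
  simp only [mem_Icc, he, ne_eq, not_false_eq_true, true_and]
  congr 1
  simp; omega

/-- `f` evaluated at the least prime factor of `n`, and `0` for `n ≤ 1`. -/
def atMinFac (f : ℕ → ℝ) (n : ℕ) : ℝ := if n ≤ 1 then 0 else f n.minFac

lemma abs_moebius_mul_atMinFac {f : ℕ → ℝ} (hf : ∀ n, |f n| ≤ 1) (n : ℕ) :
    |(μ n : ℝ) * atMinFac f n| ≤ 1 := by
  rw [abs_mul]
  refine mul_le_one₀ (abs_moebius_le_one_real n) (abs_nonneg _) ?_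
  unfold atMinFac
  split_ifs
  · simp
  · exact hf _

/-- `∑_{n ≤ N} μ(n) f(p(n)) = o(N)`: integers with `p(n) ≤ Y` are handled by finitely many coprime
Möbius sums, and the others have density `φ(Y!)/Y!`. -/
lemma sublinear_moebius_atMinFac {f : ℕ → ℝ} (hf : ∀ n, |f n| ≤ 1) :
    Sublinear (fun N => ∑ n ∈ Icc 1 N, (μ n : ℝ) * atMinFac f n) := by
  intro ε hε
  obtain ⟨Y, hY⟩ := (tendsto_totient_factorial_div.eventually
    (gt_mem_nhds (show (0 : ℝ) < ε / 2 by positivity))).exists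
  have hS : Sublinear (fun N => ∑ j ∈ Icc 1 Y, f j *
      (∑ n ∈ Icc 1 N, (μ n : ℝ) * cop (j - 1).factorial n -
        ∑ n ∈ Icc 1 N, (μ n : ℝ) * cop j.factorial n)) := by
    refine Sublinear.sum _ fun j _ => Sublinear.const_mul _ ?_
    have : NeZero (j - 1).factorial := ⟨Nat.factorial_ne_zero _⟩
    have : NeZero j.factorial := ⟨Nat.factorial_ne_zero _⟩
    exact (sublinear_moebius_cop _).sub (sublinear_moebius_cop _)
  obtain ⟨C, hC, hSC⟩ := hS (ε / 2) (by positivity)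
  refine ⟨C + Nat.totient Y.factorial, by positivity, fun N => ?_⟩
  have h1 : ∑ j ∈ Icc 1 Y, f j *
      (∑ n ∈ Icc 1 N, (μ n : ℝ) * cop (j - 1).factorial n -
        ∑ n ∈ Icc 1 N, (μ n : ℝ) * cop j.factorial n) =
      ∑ n ∈ Icc 1 N, (μ n : ℝ) * (if n ≠ 1 ∧ n.minFac ≤ Y then f n.minFac else 0) := by
    simp only [← sum_cop_factorial f Y]
    simp only [← sum_sub_distrib, mul_sum]
    rw [sum_comm]
    exact sum_congr rfl fun n _ => sum_congr rfl fun j _ => by ring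
  have h2 := hSC N
  simp only [h1] at h2
  have h3 : |∑ n ∈ Icc 1 N, (μ n : ℝ) * atMinFac f n - ∑ n ∈ Icc 1 N, (μ n : ℝ) *
      (if n ≠ 1 ∧ n.minFac ≤ Y then f n.minFac else 0)| ≤
      ∑ n ∈ Icc 1 N, cop Y.factorial n := by
    rw [← sum_sub_distrib]
    refine (abs_sum_le_sum_abs _ _).trans (sum_le_sum fun n hn => ?_)
    rw [mem_Icc] at hn
    rw [← mul_sub, abs_mul]
    refine (mul_le_of_le_one_left (abs_nonneg _) (abs_moebius_le_one_real n)).trans ?_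
    unfold atMinFac
    by_cases hn1 : n = 1
    · subst hn1; simp [cop_nonneg]
    · rw [if_neg (by omega), cop_factorial hn1]
      by_cases h4 : n.minFac ≤ Y
      · rw [if_pos ⟨hn1, h4⟩, if_neg (by omega)]; simp
      · rw [if_neg (by tauto), if_pos (by omega), sub_zero]; exact hf _
  have h4 : ∑ n ∈ Icc 1 N, cop Y.factorial n ≤ ε / 2 * N + Nat.totient Y.factorial := by
    have h5 := Nat.Ico_filter_coprime_le 1 N (Nat.factorial_ne_zero Y)
    have h6 : ∑ n ∈ Icc 1 N, cop Y.factorial n =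
        (((Ico 1 (1 + N)).filter (fun x => Y.factorial.Coprime x)).card : ℝ) := by
      unfold cop
      rw [← sum_filter, sum_const, nsmul_eq_mul, mul_one]
      congr 2
      ext n
      simp only [mem_filter, mem_Icc, mem_Ico, Nat.coprime_comm (m := n)]
      omega
    rw [h6]
    have hpos : (0 : ℝ) < Y.factorial := by exact_mod_cast Nat.factorial_pos Y
    calc (((Ico 1 (1 + N)).filter (fun x => Y.factorial.Coprime x)).card : ℝ)
        ≤ Nat.totient Y.factorial * ((N / Y.factorial : ℕ) + 1) := by exact_mod_cast h5
      _ ≤ Nat.totient Y.factorial * ((N : ℝ) / Y.factorial + 1) := by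
          gcongr; exact Nat.cast_div_le
      _ = (Nat.totient Y.factorial : ℝ) / Y.factorial * N + Nat.totient Y.factorial := by ring
      _ ≤ _ := by gcongr
  have h5 := abs_sub_abs_le_abs_sub (∑ n ∈ Icc 1 N, (μ n : ℝ) * atMinFac f n)
    (∑ n ∈ Icc 1 N, (μ n : ℝ) * (if n ≠ 1 ∧ n.minFac ≤ Y then f n.minFac else 0))
  change |∑ n ∈ Icc 1 N, (μ n : ℝ) * atMinFac f n| ≤ _
  linarith

/-! ### Duality and the formula of Alladi -/

/-- Cancellation in `∑_{e ∣ n} μ(e) F(e)` by pairing `e` with `eP`. -/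
lemma sum_moebius_pairing {n P : ℕ} (hn : n ≠ 0) (hP : P.Prime) (hPn : P ∣ n) (F : ℕ → ℝ)
    (hF : ∀ e, e ∣ n → ¬ P ∣ e → F (e * P) = F e) :
    ∑ e ∈ n.divisors, (μ e : ℝ) * F e = 0 := by
  rw [← sum_filter_add_sum_filter_not n.divisors (fun e => P ∣ e)]
  have h1 : ∑ e ∈ n.divisors.filter (fun e => P ∣ e), (μ e : ℝ) * F e =
      ∑ e ∈ (n.divisors.filter (fun e => ¬ P ∣ e)).image (fun e => e * P), (μ e : ℝ) * F e := by
    symm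
    apply sum_subset
    · intro x hx
      simp only [mem_image, mem_filter, Nat.mem_divisors] at hx ⊢
      obtain ⟨e, ⟨⟨hen, _⟩, hPe⟩, rfl⟩ := hx
      refine ⟨⟨?_, hn⟩, Dvd.intro_left e rfl⟩
      exact Nat.Coprime.mul_dvd_of_dvd_of_dvd ((hP.coprime_iff_not_dvd.mpr hPe).symm) hen hPn
    · intro x hx hx'
      simp only [mem_filter, Nat.mem_divisors] at hx
      obtain ⟨⟨hxn, _⟩, e, rfl⟩ := hx
      have hPe : P ∣ e := by
        by_contra hPe
        apply hx'
        simp only [mem_image, mem_filter, Nat.mem_divisors]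
        exact ⟨e, ⟨⟨(Dvd.intro_left P rfl).trans hxn, hn⟩, hPe⟩, mul_comm _ _⟩
      have : ¬ Squarefree (P * e) := by
        intro hsq
        exact hP.not_isUnit (hsq P (mul_dvd_mul_left P hPe))
      rw [ArithmeticFunction.moebius_eq_zero_of_not_squarefree this]
      simp
  rw [h1, sum_image (fun x _ y _ h => Nat.eq_of_mul_eq_mul_right hP.pos h), ← sum_add_distrib]
  apply sum_eq_zero
  intro e he
  simp only [mem_filter, Nat.mem_divisors] at he
  have hcop : e.Coprime P := (hP.coprime_iff_not_dvd.mpr he.2).symm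
  rw [hF e he.1.1 he.2, ArithmeticFunction.isMultiplicative_moebius.map_mul_of_coprime hcop,
    ArithmeticFunction.moebius_apply_prime hP]
  push_cast; ring

lemma minFac_mul_eq {d e : ℕ} (hd : d ≠ 1) (he : e ≠ 1) :
    (d * e).minFac = min d.minFac e.minFac := by
  have hde : d * e ≠ 1 := fun h => hd (mul_eq_one.mp h).1
  apply le_antisymm
  · apply le_min
    · exact Nat.minFac_le_of_dvd (Nat.minFac_prime hd).two_le ((Nat.minFac_dvd d).mul_right e)
    · exact Nat.minFac_le_of_dvd (Nat.minFac_prime he).two_le ((Nat.minFac_dvd e).mul_left d)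
  · have hp := Nat.minFac_prime hde
    rcases (hp.dvd_mul).mp (Nat.minFac_dvd (d * e)) with h | h
    · exact (min_le_left _ _).trans (Nat.minFac_le_of_dvd hp.two_le h)
    · exact (min_le_right _ _).trans (Nat.minFac_le_of_dvd hp.two_le h)

/-- Alladi's duality between least and largest prime factors. -/
lemma alladi_duality (f : ℕ → ℝ) {n : ℕ} (hn : 2 ≤ n) :
    ∑ e ∈ n.divisors, (μ e : ℝ) * atMinFac f e = - f (maxFac n) := by
  have hmem := maxFac_mem hn
  have hP := Nat.prime_of_mem_primeFactors hmem
  have hPn := Nat.dvd_of_mem_primeFactors hmem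
  -- giving `e = 1` the value `f(P(n))` makes the pairing `e ↔ e P(n)` exact
  have h := sum_moebius_pairing (by omega) hP hPn
    (fun e => if e = 1 then f (maxFac n) else f e.minFac) ?_
  · have h2 : ∀ e ∈ n.divisors, (μ e : ℝ) * atMinFac f e =
        (μ e : ℝ) * (if e = 1 then f (maxFac n) else f e.minFac) -
          (if e = 1 then f (maxFac n) else 0) := by
      intro e he
      have he0 : 0 < e := Nat.pos_of_mem_divisors he
      unfold atMinFac
      by_cases h1 : e = 1
      · subst h1; simp
      · rw [if_neg (by omega), if_neg h1, if_neg h1, sub_zero]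
    rw [sum_congr rfl h2, sum_sub_distrib, h, sum_ite_eq', if_pos (by simp; omega)]
    ring
  · intro e hen hPe
    have hne : e * maxFac n ≠ 1 := fun h => hP.ne_one (mul_eq_one.mp h).2
    rw [if_neg hne]
    by_cases h1 : e = 1
    · subst h1; rw [if_pos rfl, one_mul, hP.minFac_eq]
    · rw [if_neg h1, minFac_mul_eq h1 hP.ne_one, hP.minFac_eq, min_eq_left]
      exact le_maxFac (Nat.mem_primeFactors.mpr
        ⟨Nat.minFac_prime h1, (Nat.minFac_dvd e).trans hen, by omega⟩)

/-- The convolution of `1` with `μ(n) 1_{(n,Q)=1}` is the indicator of the integers composed of primes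
dividing `Q`; in particular it is supported on `Q`-smooth integers. -/
lemma abs_sum_moebius_cop_le {Q m : ℕ} (hQ : Q ≠ 0) (hm : m ≠ 0) :
    |∑ e ∈ m.divisors, (μ e : ℝ) * cop Q e| ≤ if maxFac m ≤ Q then 1 else 0 := by
  by_cases h : ∃ P ∈ m.primeFactors, ¬ P ∣ Q
  · obtain ⟨P, hPm, hPQ⟩ := h
    have hP := Nat.prime_of_mem_primeFactors hPm
    rw [sum_moebius_pairing hm hP (Nat.dvd_of_mem_primeFactors hPm)]
    · rw [abs_zero]; split_ifs <;> norm_num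
    · intro e _ _
      unfold cop
      have : P.Coprime Q := hP.coprime_iff_not_dvd.mpr hPQ
      have hiff : (e * P).Coprime Q ↔ e.Coprime Q :=
        Nat.coprime_mul_iff_left.trans (and_iff_left this)
      simp only [hiff]
  · push Not at h
    rw [if_pos (maxFac_le_iff.mpr fun p hp => Nat.le_of_dvd (by omega) (h p hp))]
    rw [sum_eq_single 1]
    · simp [cop]
    · intro e he he1
      have : ¬ e.Coprime Q := by
        intro hc
        have hp := Nat.minFac_prime he1
        have h1 : e.minFac ∣ Q := h _ (Nat.mem_primeFactors.mpr
          ⟨hp, (Nat.minFac_dvd e).trans (Nat.dvd_of_mem_divisors he), hm⟩)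
        have := Nat.dvd_gcd (Nat.minFac_dvd e) h1
        rw [hc] at this
        exact hp.one_lt.ne' (Nat.dvd_one.mp this)
      simp [cop, this]
    · intro h1; simp [hm] at h1

/-- `∑_{(e,Q)=1} μ(e)/e = 0`. -/
lemma tendsto_sum_moebius_cop_div (Q : ℕ) (hQ : Q ≠ 0) :
    Tendsto (fun N => ∑ e ∈ Icc 1 N, (μ e : ℝ) * cop Q e / e) atTop (nhds 0) := by
  have : NeZero Q := ⟨hQ⟩
  refine tendsto_sum_div (fun e => (μ e : ℝ) * cop Q e) (abs_moebius_mul_cop Q)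
    (sublinear_moebius_cop Q) 0 ?_
  intro ε hε
  obtain ⟨C, hC, h⟩ := sublinear_smooth Q (by omega) ε hε
  refine ⟨C, hC, fun N => ?_⟩
  refine le_trans ?_ (h N)
  refine (abs_sum_le_sum_abs _ _).trans ?_
  refine le_trans ?_ (le_abs_self _)
  change _ ≤ (((Icc 1 N).filter (fun n => maxFac n ≤ Q)).card : ℝ)
  rw [card_eq_sum_ones, sum_filter]
  push_cast
  refine sum_le_sum fun m hm => ?_
  rw [sub_zero]
  refine abs_sum_moebius_cop_le hQ ?_
  have := (mem_Icc.mp hm).1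
  omega

/-- The contribution of a divisor `d ≥ 2` vanishes: `p(de)` depends on `e` only through finitely
many coprimality conditions. -/
lemma tendsto_sum_moebius_minFac_mul (f : ℕ → ℝ) {d : ℕ} (hd : 2 ≤ d) :
    Tendsto (fun N => ∑ e ∈ Icc 1 N, (μ e : ℝ) * f (d * e).minFac / e) atTop (nhds 0) := by
  have hD := Nat.minFac_prime (by omega : d ≠ 1)
  set D := d.minFac with hDdef
  have hid : ∀ e, 1 ≤ e → f (d * e).minFac = f D * cop (D - 1).factorial e +
      ∑ j ∈ Icc 1 (D - 1), f j * (cop (j - 1).factorial e - cop j.factorial e) := by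
    intro e he
    rw [sum_cop_factorial]
    by_cases he1 : e = 1
    · subst he1; simp [cop_one_right, hDdef]
    · rw [minFac_mul_eq (by omega) he1, cop_factorial he1]
      have := hD.two_le
      by_cases h : e.minFac ≤ D - 1
      · rw [if_neg (by omega), if_pos ⟨he1, h⟩, min_eq_right (by omega)]; ring
      · rw [if_pos (by omega), if_neg (by tauto), min_eq_left (by omega)]; ring
  have h0 := fun j : ℕ => tendsto_sum_moebius_cop_div j.factorial (Nat.factorial_ne_zero j)
  have h1 := ((h0 (D - 1)).const_mul (f D)).add
    (tendsto_finsetSum (Icc 1 (D - 1)) fun j _ => ((h0 (j - 1)).sub (h0 j)).const_mul (f j))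
  simp only [sub_self, mul_zero, sum_const_zero, add_zero] at h1
  refine h1.congr fun N => ?_
  have h2 : ∀ e ∈ Icc 1 N, (μ e : ℝ) * f (d * e).minFac / e =
      f D * ((μ e : ℝ) * cop (D - 1).factorial e / e) +
      ∑ j ∈ Icc 1 (D - 1), f j * ((μ e : ℝ) * cop (j - 1).factorial e / e -
        (μ e : ℝ) * cop j.factorial e / e) := by
    intro e he
    rw [hid e (mem_Icc.mp he).1, mul_add, add_div, mul_sum, sum_div]
    congr 1
    · ring
    · exact sum_congr rfl fun j _ => by ring
  rw [sum_congr rfl h2, sum_add_distrib, ← mul_sum, sum_comm]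
  congr 1
  refine sum_congr rfl fun j _ => ?_
  rw [← mul_sum, sum_sub_distrib]

/-- The indicator of the residue class `a`. -/
noncomputable def ind {q : ℕ} (a : ZMod q) (n : ℕ) : ℝ := if (n : ZMod q) = a then 1 else 0

/-- Alladi's formula `∑ μ(n)/n = -1/φ(q)` over `n ≥ 2` with `p(n) ≡ a (mod q)`. -/
lemma tendsto_alladi {q : ℕ} [NeZero q] {a : ZMod q} (ha : IsUnit a) :
    Tendsto (fun N => ∑ n ∈ Icc 1 N, (μ n : ℝ) * atMinFac (ind a) n / n) atTop
      (nhds (-(1 / (q.totient : ℝ)))) := by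
  have hind : ∀ n, |ind a n| ≤ 1 := by
    intro n; unfold ind; split_ifs <;> simp
  refine tendsto_sum_div _ (abs_moebius_mul_atMinFac hind) (sublinear_moebius_atMinFac hind) _ ?_
  have h1 : Sublinear (fun N => ∑ n ∈ Icc 1 N, if n = 1 then ind a 0 else 0) := by
    intro ε hε
    refine ⟨1, by norm_num, fun N => ?_⟩
    have : |∑ n ∈ Icc 1 N, if n = 1 then ind a 0 else 0| ≤ 1 := by
      rw [sum_ite_eq']
      split_ifs
      · exact hind 0
      · simp
    have h2 : 0 ≤ ε * N := by positivity
    change |∑ n ∈ Icc 1 N, if n = 1 then ind a 0 else 0| ≤ _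
    linarith
  have h2 := ((sublinear_osc_maxFac ha).const_mul (-1)).add h1
  convert h2 using 2 with N
  rw [mul_sum, ← sum_add_distrib]
  refine sum_congr rfl fun m hm => ?_
  have hm1 := (mem_Icc.mp hm).1
  by_cases h3 : m = 1
  · subst h3
    simp [atMinFac, osc, maxFac_one, ind]
  · rw [alladi_duality _ (by omega), if_neg h3, osc, ind]
    ring

/-! ### Ramanujan sums -/

/-- Orthogonality of the additive characters modulo `t`. -/
lemma sum_exp_eq {t : ℕ} (ht : t ≠ 0) (m : ℕ) :
    ∑ r ∈ Icc 1 t, Complex.exp (2 * Real.pi * Complex.I * r * m / t) =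
      if t ∣ m then (t : ℂ) else 0 := by
  have hprim := Complex.isPrimitiveRoot_exp t ht
  set ζ := Complex.exp (2 * Real.pi * Complex.I / t) with hζ
  have hterm : ∀ r : ℕ, Complex.exp (2 * Real.pi * Complex.I * r * m / t) = (ζ ^ m) ^ r := by
    intro r
    rw [hζ, ← Complex.exp_nat_mul, ← Complex.exp_nat_mul]
    congr 1; ring
  simp only [hterm]
  have hper : (ζ ^ m) ^ t = 1 := by rw [← pow_mul, mul_comm, pow_mul, hprim.pow_eq_one, one_pow]
  by_cases h : t ∣ m
  · rw [if_pos h, (hprim.pow_eq_one_iff_dvd m).mpr h]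
    simp
  · rw [if_neg h]
    have hne : ζ ^ m ≠ 1 := fun h' => h ((hprim.pow_eq_one_iff_dvd m).mp h')
    have h1 : ∑ r ∈ Icc 1 t, (ζ ^ m) ^ r = ζ ^ m * ∑ i ∈ range t, (ζ ^ m) ^ i := by
      rw [mul_sum, ← Finset.Ico_succ_right_eq_Icc, sum_Ico_eq_sum_range]
      refine sum_congr (by simp) fun i _ => ?_
      rw [pow_add, pow_one]
    rw [h1, geom_sum_eq hne, hper]
    simp

lemma sum_moebius_gcd (q : ℕ) {n : ℕ} (hn : n ≠ 0) :
    ∑ e ∈ n.divisors, (if e ∣ q then (μ e : ℂ) else 0) = if Nat.gcd q n = 1 then 1 else 0 := by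
  rw [← sum_filter]
  have hg : Nat.gcd q n ≠ 0 := Nat.gcd_ne_zero_right hn
  have h1 : n.divisors.filter (fun e => e ∣ q) = (Nat.gcd q n).divisors := by
    ext e
    simp only [mem_filter, Nat.mem_divisors, Nat.dvd_gcd_iff]
    tauto
  have h2 : ∑ e ∈ (Nat.gcd q n).divisors, μ e = if Nat.gcd q n = 1 then 1 else 0 := by
    rw [← ArithmeticFunction.coe_mul_zeta_apply, ArithmeticFunction.moebius_mul_coe_zeta,
      ArithmeticFunction.one_apply]
  rw [h1]
  exact_mod_cast h2

lemma sum_multiples {M : Type*} [AddCommMonoid M] {d : ℕ} (hd : d ≠ 0) (N : ℕ) (g : ℕ → M) :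
    ∑ n ∈ (Icc 1 N).filter (fun n => d ∣ n), g n = ∑ e ∈ Icc 1 (N / d), g (d * e) := by
  have hd' : 0 < d := Nat.pos_of_ne_zero hd
  symm
  rw [← sum_image (f := g) (g := fun e => d * e)
    (fun x _ y _ h => Nat.eq_of_mul_eq_mul_left hd' h)]
  congr 1
  ext n
  simp only [mem_image, mem_filter, mem_Icc]
  constructor
  · rintro ⟨e, ⟨h1, h2⟩, rfl⟩
    rw [Nat.le_div_iff_mul_le hd'] at h2
    exact ⟨⟨Nat.mul_pos hd' h1, by rwa [mul_comm]⟩, Dvd.intro e rfl⟩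
  · rintro ⟨⟨h1, h2⟩, e, rfl⟩
    refine ⟨e, ⟨Nat.pos_of_mul_pos_left h1, ?_⟩, rfl⟩
    rw [Nat.le_div_iff_mul_le hd', mul_comm]
    exact h2

/-- The evaluation `c_n(m) = ∑_{d ∣ gcd(n,m)} μ(n/d) d`. -/
lemma ramanujanSum_eq {n m : ℕ} (hn : n ≠ 0) (hm : m ≠ 0) :
    ramanujanSum n m = ∑ d ∈ m.divisors, if d ∣ n then (μ (n / d) : ℂ) * d else 0 := by
  have h1 : ramanujanSum n m = ∑ e ∈ n.divisors, (μ e : ℂ) *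
      (if n / e ∣ m then ((n / e : ℕ) : ℂ) else 0) := by
    unfold ramanujanSum
    rw [sum_filter]
    have h2 : ∀ q ∈ Icc 1 n, (if Nat.gcd q n = 1 then
        Complex.exp (2 * Real.pi * Complex.I * q * m / n) else 0) =
        ∑ e ∈ n.divisors, (if e ∣ q then (μ e : ℂ) *
          Complex.exp (2 * Real.pi * Complex.I * q * m / n) else 0) := by
      intro q _
      have := congrArg (fun z => z * Complex.exp (2 * Real.pi * Complex.I * q * m / n))
        (sum_moebius_gcd q hn)
      simp only [sum_mul, ite_mul, zero_mul, one_mul] at this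
      exact this.symm
    rw [sum_congr rfl h2, sum_comm]
    refine sum_congr rfl fun e he => ?_
    have hen := Nat.dvd_of_mem_divisors he
    have he0 : e ≠ 0 := (Nat.pos_of_mem_divisors he).ne'
    obtain ⟨t, rfl⟩ := hen
    have ht : t ≠ 0 := right_ne_zero_of_mul hn
    rw [← sum_filter, sum_multiples he0, ← mul_sum, Nat.mul_div_cancel_left t (by omega),
      ← sum_exp_eq ht]
    congr 1
    refine sum_congr rfl fun r _ => ?_
    congr 1
    have : (e : ℂ) ≠ 0 := by exact_mod_cast he0
    have : (t : ℂ) ≠ 0 := by exact_mod_cast ht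
    push_cast
    field_simp
  rw [h1, ← Nat.sum_div_divisors]
  have h3 : ∀ d ∈ n.divisors, (μ (n / d) : ℂ) *
      (if n / (n / d) ∣ m then ((n / (n / d) : ℕ) : ℂ) else 0) =
      if d ∣ m then (μ (n / d) : ℂ) * d else 0 := by
    intro d hd
    rw [Nat.div_div_self (Nat.dvd_of_mem_divisors hd) hn, mul_ite, mul_zero]
  rw [sum_congr rfl h3, ← sum_filter, ← sum_filter]
  congr 1
  ext d
  simp only [mem_filter, Nat.mem_divisors]
  tauto

/-- Writing `n = de` with `d ∣ m` splits the partial sums into one Möbius sum for each `d`. -/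
lemma sum_ramanujanSum_eq (f : ℕ → ℝ) {m : ℕ} (hm : m ≠ 0) (N : ℕ) :
    ∑ n ∈ Icc 1 N, (atMinFac f n : ℂ) * (ramanujanSum n m / n) =
      ((∑ d ∈ m.divisors, ∑ e ∈ Icc 1 (N / d), (μ e : ℝ) * atMinFac f (d * e) / e : ℝ) : ℂ) := by
  push_cast
  have h1 : ∀ n ∈ Icc 1 N, (atMinFac f n : ℂ) * (ramanujanSum n m / n) =
      ∑ d ∈ m.divisors, if d ∣ n then
        (atMinFac f n : ℂ) * ((μ (n / d) : ℂ) * d / n) else 0 := by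
    intro n hn
    have hn1 := (mem_Icc.mp hn).1
    rw [ramanujanSum_eq (by omega) hm, sum_div, mul_sum]
    refine sum_congr rfl fun d _ => ?_
    split_ifs <;> simp
  rw [sum_congr rfl h1, sum_comm]
  refine sum_congr rfl fun d hd => ?_
  have hd0 : d ≠ 0 := (Nat.pos_of_mem_divisors hd).ne'
  rw [← sum_filter, sum_multiples hd0]
  refine sum_congr rfl fun e he => ?_
  have he1 := (mem_Icc.mp he).1
  have h2 : (e : ℂ) ≠ 0 := by exact_mod_cast (by omega : e ≠ 0)
  have h3 : (d : ℂ) ≠ 0 := by exact_mod_cast hd0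
  rw [Nat.mul_div_cancel_left e (by omega)]
  push_cast
  field_simp

theorem alladi_formula_ramanujanSum (k : ℕ) (hk : 1 ≤ k) (ℓ : ℤ)
    (hlk : Int.gcd ℓ k = 1) (m : ℕ) (hm : 1 ≤ m) :
    Tendsto
      (fun x : ℝ =>
        ∑ n ∈ (Finset.Icc 2 ⌊x⌋₊).filter
            (fun n => (Nat.minFac n : ℤ) ≡ ℓ [ZMOD (k : ℤ)]),
          ramanujanSum n m / n)
      atTop (nhds (-(1 / (Nat.totient k : ℂ)))) := by
  have : NeZero k := ⟨by omega⟩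
  have hm0 : m ≠ 0 := by omega
  have ha : IsUnit ((ℓ : ℤ) : ZMod k) := by
    rw [ZMod.coe_int_isUnit_iff_isCoprime]
    exact (Int.isCoprime_iff_gcd_eq_one.mpr hlk).symm
  set a : ZMod k := (ℓ : ZMod k) with hadef
  have hdiv : ∀ d ∈ m.divisors, Tendsto (fun N : ℕ => ∑ e ∈ Icc 1 (N / d),
      (μ e : ℝ) * atMinFac (ind a) (d * e) / e) atTop
      (nhds (if d = 1 then -(1 / (k.totient : ℝ)) else 0)) := by
    intro d hd
    have hd0 : 0 < d := Nat.pos_of_mem_divisors hd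
    refine Tendsto.comp (g := fun N : ℕ => ∑ e ∈ Icc 1 N,
      (μ e : ℝ) * atMinFac (ind a) (d * e) / e) ?_ (Nat.tendsto_div_const_atTop hd0.ne')
    by_cases h1 : d = 1
    · subst h1
      simpa only [one_mul, if_true] using tendsto_alladi ha
    · rw [if_neg h1]
      refine (tendsto_sum_moebius_minFac_mul (ind a) (by omega : 2 ≤ d)).congr fun N => ?_
      refine sum_congr rfl fun e he => ?_
      have he1 := (mem_Icc.mp he).1
      have : ¬ d * e ≤ 1 := by nlinarith [show 2 ≤ d by omega]
      rw [atMinFac, if_neg this]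
  have hsum := tendsto_finsetSum m.divisors hdiv
  rw [sum_ite_eq', if_pos (Nat.one_mem_divisors.mpr hm0)] at hsum
  have hC := ((Complex.continuous_ofReal.tendsto _).comp hsum).comp
    (tendsto_nat_floor_atTop (α := ℝ))
  have hlim : ((-(1 / (k.totient : ℝ)) : ℝ) : ℂ) = -(1 / (k.totient : ℂ)) := by push_cast; rfl
  rw [hlim] at hC
  refine hC.congr fun x => ?_
  simp only [Function.comp_apply]
  rw [← sum_ramanujanSum_eq (ind a) hm0, sum_filter]
  symm
  have hsub : Icc 2 ⌊x⌋₊ ⊆ Icc 1 ⌊x⌋₊ := Icc_subset_Icc_left (by norm_num)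
  rw [← sum_subset hsub]
  · refine sum_congr rfl fun n hn => ?_
    have hn2 := (mem_Icc.mp hn).1
    have hiff : ((n.minFac : ℕ) : ZMod k) = a ↔ (n.minFac : ℤ) ≡ ℓ [ZMOD (k : ℤ)] := by
      rw [← ZMod.intCast_eq_intCast_iff, Int.cast_natCast]
    rw [atMinFac, if_neg (show ¬ n ≤ 1 by omega), ind]
    simp only [hiff]
    split_ifs <;> simp
  · intro n hn hn'
    have hn1 : n ≤ 1 := by
      simp only [mem_Icc] at hn hn'
      omega
    simp [atMinFac, hn1]
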